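/- arXiv:2010.10336 — 10 statements merged into one kernel-verified Lean document; each statement's English description precedes it below -/
import Mathlib

section
/- Let 0 < a < 1, let 0 < α < 1 < β, let λ > 0, and let p : ℝ → ℝ be measurable with α ≤ p(x) ≤ β for a.e. x ∈ [−π, −aπ]. Suppose e : ℝ → ℝ is three times continuously differentiable on [−π, −aπ] and satisfies the Volterra identity e'''(x) = e'''(−π) + λ ∫_{−π}^{x} p(t) e(t) dt for all x ∈ [−π, −aπ], together with e(−π) = 0 and e''(−π) = 0. If either (e'(−π) = 0 and e'''(−π) > 0) or (e'(−π) > 0 and e'''(−π) = 0), then e(x) > 0 for all x ∈ (−π, −aπ]. -/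
open Real MeasureTheory Set Filter

/-- A function with nonnegative derivative inside `[b, y] ⊆ [b, c]` is monotone on `[b, y]`. -/
lemma monotoneOn_Icc_of_hasDerivWithinAt_nonneg {b c y : ℝ} (hy : y ≤ c) {f f' : ℝ → ℝ}
    (hf : ∀ x ∈ Icc b c, HasDerivWithinAt f (f' x) (Icc b c) x)
    (hf' : ∀ x ∈ Ioo b y, 0 ≤ f' x) : MonotoneOn f (Icc b y) := by
  have hsub : Icc b y ⊆ Icc b c := Icc_subset_Icc_right hy
  refine monotoneOn_of_hasDerivWithinAt_nonneg (f' := f') (convex_Icc b y)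
    (fun x hx => ((hf x (hsub hx)).mono hsub).continuousWithinAt) (fun x hx => ?_)
    (fun x hx => hf' x (by simpa using hx))
  have hx' := interior_subset hx
  exact (hf x (hsub hx')).mono (interior_subset.trans hsub)

/-- A function nonnegative at `b`, with positive derivative inside `[b, y] ⊆ [b, c]`,
is positive on `(b, y]`. -/
lemma pos_on_Ioc_of_hasDerivWithinAt_pos {b c y : ℝ} (hy : y ≤ c) {f f' : ℝ → ℝ}
    (hf : ∀ x ∈ Icc b c, HasDerivWithinAt f (f' x) (Icc b c) x)
    (hb : 0 ≤ f b) (hf' : ∀ x ∈ Ioc b y, 0 < f' x) : ∀ x ∈ Ioc b y, 0 < f x := by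
  have hsub : Icc b y ⊆ Icc b c := Icc_subset_Icc_right hy
  have hmono : StrictMonoOn f (Icc b y) := by
    refine strictMonoOn_of_hasDerivWithinAt_pos (f' := f') (convex_Icc b y)
      (fun x hx => ((hf x (hsub hx)).mono hsub).continuousWithinAt) (fun x hx => ?_)
      (fun x hx => ?_)
    · have hx' := interior_subset hx
      exact (hf x (hsub hx')).mono (interior_subset.trans hsub)
    · rw [interior_Icc] at hx
      exact hf' x ⟨hx.1, hx.2.le⟩
  intro x hx
  exact hb.trans_lt (hmono ⟨le_rfl, hx.1.le.trans hx.2⟩ ⟨hx.1.le, hx.2⟩ hx.1)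

/-- A function continuous on `[b, c]` and positive at `b` is positive on some `[b, d]`. -/
lemma exists_pos_on_Icc_of_continuousOn {b c : ℝ} (hbc : b < c) {f : ℝ → ℝ}
    (hf : ContinuousOn f (Icc b c)) (hb : 0 < f b) :
    ∃ d ∈ Ioc b c, ∀ x ∈ Icc b d, 0 < f x := by
  have hev : ∀ᶠ x in nhdsWithin b (Ici b), 0 < f x := by
    have h := (hf b ⟨le_rfl, hbc.le⟩).eventually (lt_mem_nhds hb)
    rwa [nhdsWithin_Icc_eq_nhdsGE hbc] at h
  obtain ⟨u, hu, hsub⟩ := mem_nhdsGE_iff_exists_Icc_subset.1 hev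
  refine ⟨min u c, ⟨lt_min hu hbc, min_le_right _ _⟩, fun x hx => ?_⟩
  exact hsub ⟨hx.1, hx.2.trans (min_le_left _ _)⟩

/-- Positivity of solutions of `e'''' = lam * p * e`, in integrated form, with `p ≥ 0` and initial
data `e = e'' = 0`, `e', e''' ≥ 0` not both zero. -/
lemma beam_solution_pos {b c lam : ℝ} (hbc : b < c) (hlam : 0 ≤ lam) {p e e' e'' e''' : ℝ → ℝ}
    (hp : ∀ᵐ x ∂(volume.restrict (Icc b c)), 0 ≤ p x)
    (he : ∀ x ∈ Icc b c, HasDerivWithinAt e (e' x) (Icc b c) x)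
    (he' : ∀ x ∈ Icc b c, HasDerivWithinAt e' (e'' x) (Icc b c) x)
    (he'' : ∀ x ∈ Icc b c, HasDerivWithinAt e'' (e''' x) (Icc b c) x)
    (he''' : ContinuousOn e''' (Icc b c))
    (hVolterra : ∀ x ∈ Icc b c, e''' x = e''' b + lam * ∫ t in b..x, p t * e t)
    (hb0 : e b = 0) (hb2 : e'' b = 0)
    (hcase : (e' b = 0 ∧ 0 < e''' b) ∨ (0 < e' b ∧ e''' b = 0)) :
    ∀ x ∈ Ioc b c, 0 < e x := by
  have hb1 : 0 ≤ e' b := by rcases hcase with h | h <;> linarith [h.1, h.2]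
  have hb3 : 0 ≤ e''' b := by rcases hcase with h | h <;> linarith [h.1, h.2]
  obtain ⟨d, hd, hpos⟩ : ∃ d ∈ Ioc b c, ∀ x ∈ Ioc b d, 0 < e x := by
    rcases hcase with ⟨-, h⟩ | ⟨h, -⟩
    · obtain ⟨d, hd, hpos⟩ := exists_pos_on_Icc_of_continuousOn hbc he''' h
      exact ⟨d, hd, pos_on_Ioc_of_hasDerivWithinAt_pos hd.2 he hb0.ge <|
        pos_on_Ioc_of_hasDerivWithinAt_pos hd.2 he' hb1 <|
        pos_on_Ioc_of_hasDerivWithinAt_pos hd.2 he'' hb2.ge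
          fun x hx => hpos x (Ioc_subset_Icc_self hx)⟩
    · obtain ⟨d, hd, hpos⟩ := exists_pos_on_Icc_of_continuousOn hbc
        (fun x hx => (he' x hx).continuousWithinAt) h
      exact ⟨d, hd, pos_on_Ioc_of_hasDerivWithinAt_pos hd.2 he hb0.ge
        fun x hx => hpos x (Ioc_subset_Icc_self hx)⟩
  have hmono : ∀ y ≤ c, (∀ x ∈ Ico b y, 0 ≤ e x) → MonotoneOn e (Icc b y) := by
    intro y hy hnonneg
    have h3 : ∀ x ∈ Ioo b y, 0 ≤ e''' x := by
      intro x hx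
      have hxc : x ≤ c := hx.2.le.trans hy
      have hint : 0 ≤ ∫ t in b..x, p t * e t := by
        refine intervalIntegral.integral_nonneg_of_ae_restrict hx.1.le ?_
        filter_upwards [ae_restrict_of_ae_restrict_of_subset (Icc_subset_Icc_right hxc) hp,
          ae_restrict_mem measurableSet_Icc] with t ht htx
        exact mul_nonneg ht (hnonneg t ⟨htx.1, htx.2.trans_lt hx.2⟩)
      rw [hVolterra x ⟨hx.1.le, hxc⟩]
      positivity
    have hstep : ∀ {f f' : ℝ → ℝ},
        (∀ x ∈ Icc b c, HasDerivWithinAt f (f' x) (Icc b c) x) → 0 ≤ f b →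
        (∀ x ∈ Ioo b y, 0 ≤ f' x) → ∀ x ∈ Ioo b y, 0 ≤ f x := fun hf h0 hf' x hx =>
      h0.trans (monotoneOn_Icc_of_hasDerivWithinAt_nonneg hy hf hf'
        ⟨le_rfl, (hx.1.trans hx.2).le⟩ (Ioo_subset_Icc_self hx) hx.1.le)
    exact monotoneOn_Icc_of_hasDerivWithinAt_nonneg hy he
      (hstep he' hb1 (hstep he'' hb2.ge h3))
  intro x hx
  by_contra! hneg
  have hdx : d < x := not_le.1 fun h => (hpos x ⟨hx.1, h⟩).not_ge hneg
  have hcont : ContinuousOn e (Icc d x) := fun z hz =>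
    (he z ⟨hd.1.le.trans hz.1, hz.2.trans hx.2⟩).continuousWithinAt.mono
      (Icc_subset_Icc hd.1.le hx.2)
  have hcompact : IsCompact (Icc d x ∩ e ⁻¹' Iic 0) :=
    isCompact_Icc.of_isClosed_subset (hcont.preimage_isClosed_of_isClosed isClosed_Icc isClosed_Iic)
      inter_subset_left
  obtain ⟨y, ⟨hy, hey⟩, hleast⟩ := hcompact.exists_isLeast ⟨x, ⟨hdx.le, le_rfl⟩, hneg⟩
  have hnonneg : ∀ z ∈ Ico b y, 0 ≤ e z := by
    intro z hz
    rcases hz.1.eq_or_lt with rfl | hbz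
    · exact hb0.ge
    rcases le_or_gt z d with hzd | hdz
    · exact (hpos z ⟨hbz, hzd⟩).le
    · by_contra! hez
      exact hz.2.not_ge (hleast ⟨⟨hdz.le, hz.2.le.trans hy.2⟩, hez.le⟩)
  have hdy := hmono y (hy.2.trans hx.2) hnonneg ⟨hd.1.le, hy.1⟩ ⟨hd.1.le.trans hy.1, le_rfl⟩ hy.1
  exact (hpos d ⟨hd.1, le_rfl⟩).not_ge (hdy.trans hey)

/-- Lemma (Nehari-type positivity, left span): if `e` is `C³` on the left span
`[-π, -aπ]`, satisfies the Volterra identity for the fourth-order beam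
equation `e'''' = λ p e` with density `α ≤ p ≤ β` a.e., with hinged data
`e(-π) = e''(-π) = 0`, and either `e'(-π) = 0, e'''(-π) > 0` or
`e'(-π) > 0, e'''(-π) = 0`, then `e > 0` on `(-π, -aπ]`. -/
theorem stmt0 (a α β lam : ℝ) (ha0 : 0 < a) (ha1 : a < 1)
    (hα0 : 0 < α) (hα1 : α < 1) (hβ : 1 < β) (hlam : 0 < lam)
    (p : ℝ → ℝ) (hpmeas : Measurable p)
    (hpbd : ∀ᵐ x ∂(volume.restrict (Set.Icc (-π) (-(a * π)))), α ≤ p x ∧ p x ≤ β)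
    (e e' e'' e''' : ℝ → ℝ)
    (he : ∀ x ∈ Set.Icc (-π) (-(a * π)),
      HasDerivWithinAt e (e' x) (Set.Icc (-π) (-(a * π))) x)
    (he' : ∀ x ∈ Set.Icc (-π) (-(a * π)),
      HasDerivWithinAt e' (e'' x) (Set.Icc (-π) (-(a * π))) x)
    (he'' : ∀ x ∈ Set.Icc (-π) (-(a * π)),
      HasDerivWithinAt e'' (e''' x) (Set.Icc (-π) (-(a * π))) x)
    (he''' : ContinuousOn e''' (Set.Icc (-π) (-(a * π))))
    (hVolterra : ∀ x ∈ Set.Icc (-π) (-(a * π)),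
      e''' x = e''' (-π) + lam * ∫ t in (-π)..x, p t * e t)
    (hb0 : e (-π) = 0) (hb2 : e'' (-π) = 0)
    (hcase : (e' (-π) = 0 ∧ 0 < e''' (-π)) ∨ (0 < e' (-π) ∧ e''' (-π) = 0)) :
    ∀ x ∈ Set.Ioc (-π) (-(a * π)), 0 < e x := by
  have hlt : -π < -(a * π) := by nlinarith [Real.pi_pos]
  exact beam_solution_pos hlt hlam.le (hpbd.mono fun x hx => hα0.le.trans hx.1)
    he he' he'' he''' hVolterra hb0 hb2 hcase
end

section
/- Let 0 < a < 1, let 0 < α < 1 < β, let λ > 0, and let p : ℝ → ℝ be measurable with α ≤ p(x) ≤ β for a.e. x ∈ [−π, −aπ]. Suppose e : ℝ → ℝ is three times continuously differentiable on [−π, −aπ], satisfies e'''(x) = e'''(−π) + λ ∫_{−π}^{x} p(t) e(t) dt for all x ∈ [−π, −aπ], and satisfies the boundary conditions e(−π) = 0, e''(−π) = 0 and e(−aπ) = 0. If e is not identically zero on [−π, −aπ], then e'(−π) ≠ 0 and e'''(−π) ≠ 0. -/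
open Real MeasureTheory Set Filter

section BeamComparison

variable {A L : ℝ}

/-- Integrating an exponential lower bound for the derivative. -/
lemma exp_lower_bound_of_deriv {C k : ℝ} {f f' : ℝ → ℝ} (hk : 0 < k) (hC : 0 ≤ C)
    (hf : ∀ x ∈ Icc A L, HasDerivWithinAt f (f' x) (Icc A L) x)
    (hA : 0 ≤ f A) (hf' : ∀ x ∈ Icc A L, -(C * exp (k * (x - A))) ≤ f' x) :
    ∀ x ∈ Icc A L, -(C / k * exp (k * (x - A))) ≤ f x := by
  intro x hx
  have hexp : ∀ y, HasDerivAt (fun y => C / k * exp (k * (y - A)))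
      (C * exp (k * (y - A))) y := by
    intro y
    have h := ((((hasDerivAt_id y).sub_const A).const_mul k).exp).const_mul (C / k)
    refine h.congr_deriv ?_
    simp only [id]
    field_simp
  have hmono : MonotoneOn (fun y => f y + C / k * exp (k * (y - A))) (Icc A L) := by
    refine monotoneOn_of_hasDerivWithinAt_nonneg
      (f' := fun y => f' y + C * exp (k * (y - A))) (convex_Icc A L) ?_ ?_ ?_
    · exact fun y hy => ((hf y hy).add (hexp y).hasDerivWithinAt).continuousWithinAt
    · exact fun y hy => ((hf y (interior_subset hy)).mono interior_subset).add
        (hexp y).hasDerivWithinAt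
    · intro y hy
      have := hf' y (interior_subset hy)
      linarith
  have h := hmono (left_mem_Icc.2 (hx.1.trans hx.2)) hx hx.1
  have : 0 ≤ C / k := by positivity
  simp only [sub_self, mul_zero, exp_zero, mul_one] at h
  linarith

/-- An exponential lower bound for `e` yields one for `p * e` after integration. -/
lemma exp_lower_bound_integral {β m k : ℝ} {p e : ℝ → ℝ} (hk : 0 < k) (hm : 0 ≤ m)
    (hβ : 0 ≤ β) (hp : Measurable p)
    (hpbd : ∀ᵐ x ∂(volume.restrict (Icc A L)), 0 ≤ p x ∧ p x ≤ β)
    (he : ContinuousOn e (Icc A L))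
    (hlow : ∀ x ∈ Icc A L, -(m * exp (k * (x - A))) ≤ e x) :
    ∀ x ∈ Icc A L, -(β * m / k * exp (k * (x - A))) ≤ ∫ t in A..x, p t * e t := by
  intro x hx
  have hsub : Icc A x ⊆ Icc A L := Icc_subset_Icc_right hx.2
  have hpx := ae_restrict_of_ae_restrict_of_subset hsub hpbd
  have hint : IntervalIntegrable (fun t => p t * e t) volume A x := by
    rw [intervalIntegrable_iff_integrableOn_Icc_of_le hx.1]
    refine Integrable.bdd_mul (c := β) ((he.mono hsub).integrableOn_Icc)
      hp.aestronglyMeasurable ?_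
    filter_upwards [hpx] with t ht
    rw [Real.norm_eq_abs, abs_of_nonneg ht.1]
    exact ht.2
  have hexp : ∀ y ∈ uIcc A x, HasDerivAt (fun y => -(β * m / k * exp (k * (y - A))))
      (-(β * m * exp (k * (y - A)))) y := by
    intro y _
    have h := (((((hasDerivAt_id y).sub_const A).const_mul k).exp).const_mul (β * m / k)).neg
    refine h.congr_deriv ?_
    simp only [id]
    field_simp
  have hcont : IntervalIntegrable (fun y => -(β * m * exp (k * (y - A)))) volume A x :=
    Continuous.intervalIntegrable (by fun_prop) _ _
  have hle := intervalIntegral.integral_mono_ae_restrict hx.1 hcont hint (by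
    filter_upwards [hpx, ae_restrict_mem measurableSet_Icc] with t ht htx
    have h1 := mul_le_mul_of_nonneg_left (hlow t (hsub htx)) ht.1
    have h2 : p t * (m * exp (k * (t - A))) ≤ β * (m * exp (k * (t - A))) :=
      mul_le_mul_of_nonneg_right ht.2 (by positivity)
    linarith)
  rw [intervalIntegral.integral_eq_sub_of_hasDerivAt hexp hcont] at hle
  have : 0 ≤ β * m / k := by positivity
  simp only [sub_self, mul_zero, exp_zero, mul_one] at hle
  linarith

/-- A solution of the beam equation with nonnegative initial data which vanishes at the
right endpoint is identically zero. -/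
lemma beam_eq_zero_of_nonneg_initial {β lam : ℝ} {p e e' e'' e''' : ℝ → ℝ}
    (hlam : 0 < lam) (hβ : 0 ≤ β) (hp : Measurable p)
    (hpbd : ∀ᵐ x ∂(volume.restrict (Icc A L)), 0 ≤ p x ∧ p x ≤ β)
    (he : ∀ x ∈ Icc A L, HasDerivWithinAt e (e' x) (Icc A L) x)
    (he' : ∀ x ∈ Icc A L, HasDerivWithinAt e' (e'' x) (Icc A L) x)
    (he'' : ∀ x ∈ Icc A L, HasDerivWithinAt e'' (e''' x) (Icc A L) x)
    (hV : ∀ x ∈ Icc A L, e''' x = e''' A + lam * ∫ t in A..x, p t * e t)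
    (h0 : 0 ≤ e A) (h1 : 0 ≤ e' A) (h2 : 0 ≤ e'' A) (h3 : 0 ≤ e''' A) (hL : e L = 0) :
    ∀ x ∈ Icc A L, e x = 0 := by
  have hec : ContinuousOn e (Icc A L) := fun x hx => (he x hx).continuousWithinAt
  set k : ℝ := lam * β + 1 with hkdef
  have hlβ : 0 ≤ lam * β := by positivity
  have hk : 0 < k := by positivity
  have step : ∀ m, 0 ≤ m → (∀ x ∈ Icc A L, -(m * exp (k * (x - A))) ≤ e x) →
      (∀ x ∈ Icc A L, -(lam * β * m / k / k / k * exp (k * (x - A))) ≤ e' x) ∧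
      ∀ x ∈ Icc A L, -(lam * β * m / k / k / k / k * exp (k * (x - A))) ≤ e x := by
    intro m hm hlow
    have b3 : ∀ x ∈ Icc A L, -(lam * β * m / k * exp (k * (x - A))) ≤ e''' x := by
      intro x hx
      have h := mul_le_mul_of_nonneg_left
        (exp_lower_bound_integral hk hm hβ hp hpbd hec hlow x hx) hlam.le
      rw [hV x hx]
      have heq : lam * -(β * m / k * exp (k * (x - A))) =
        -(lam * β * m / k * exp (k * (x - A))) := by ring
      linarith
    have b2 := exp_lower_bound_of_deriv hk (by positivity) he'' h2 b3
    have b1 := exp_lower_bound_of_deriv hk (by positivity) he' h1 b2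
    exact ⟨b1, exp_lower_bound_of_deriv hk (by positivity) he h0 b1⟩
  have hnonneg : ∀ x ∈ Icc A L, 0 ≤ e x := by
    intro x hx
    obtain ⟨y, hy, hmax⟩ := isCompact_Icc.exists_isMaxOn ⟨x, hx⟩
      (f := fun y => -e y * exp (-(k * (y - A)))) (hec.neg.mul (by fun_prop))
    by_contra! hneg
    have hinv : ∀ z, exp (-(k * (z - A))) * exp (k * (z - A)) = 1 := by
      intro z
      rw [← exp_add, neg_add_cancel, exp_zero]
    set m := -e y * exp (-(k * (y - A))) with hm
    have hle : ∀ z ∈ Icc A L, -e z * exp (-(k * (z - A))) ≤ m := fun z hz => hmax hz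
    have hmpos : 0 < m := lt_of_lt_of_le (mul_pos (neg_pos.2 hneg) (exp_pos _)) (hle x hx)
    have hlow : ∀ z ∈ Icc A L, -(m * exp (k * (z - A))) ≤ e z := by
      intro z hz
      have h := mul_le_mul_of_nonneg_right (hle z hz) (exp_pos (k * (z - A))).le
      rw [mul_assoc, hinv, mul_one] at h
      linarith
    have hy' := (step m hmpos.le hlow).2 y hy
    have hey : e y = -(m * exp (k * (y - A))) := by
      rw [hm, mul_assoc, hinv]
      ring
    rw [hey, neg_le_neg_iff] at hy'
    have hmle := le_of_mul_le_mul_right hy' (exp_pos _)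
    have hlt : lam * β * m / k / k / k / k < m := by
      have hk1 : 1 ≤ k := by linarith
      have hkk : k ≤ k ^ 4 := le_self_pow₀ hk1 (by norm_num)
      have heq : lam * β * m / k / k / k / k = lam * β * m / k ^ 4 := by
        field_simp
      rw [heq, div_lt_iff₀ (by positivity), mul_comm m]
      exact mul_lt_mul_of_pos_right (by linarith) hmpos
    exact absurd hmle hlt.not_ge
  have hmono : MonotoneOn e (Icc A L) := by
    refine monotoneOn_of_hasDerivWithinAt_nonneg (convex_Icc A L) hec
      (fun y hy => (he y (interior_subset hy)).mono interior_subset) fun y hy => ?_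
    simpa using (step 0 le_rfl (by simpa using hnonneg)).1 y (interior_subset hy)
  intro x hx
  exact le_antisymm (hL ▸ hmono hx (right_mem_Icc.2 (hx.1.trans hx.2)) hx.2) (hnonneg x hx)

end BeamComparison

/-- A nontrivial eigenfunction of the multi-point beam problem on the left
span `[-π, -aπ]`, with hinged conditions `e(-π) = e''(-π) = 0` and pier
condition `e(-aπ) = 0`, has `e'(-π) ≠ 0` and `e'''(-π) ≠ 0`. -/
theorem stmt2 (a α β lam : ℝ) (ha0 : 0 < a) (ha1 : a < 1)
    (hα0 : 0 < α) (hα1 : α < 1) (hβ : 1 < β) (hlam : 0 < lam)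
    (p : ℝ → ℝ) (hpmeas : Measurable p)
    (hpbd : ∀ᵐ x ∂(volume.restrict (Set.Icc (-π) (-(a * π)))), α ≤ p x ∧ p x ≤ β)
    (e e' e'' e''' : ℝ → ℝ)
    (he : ∀ x ∈ Set.Icc (-π) (-(a * π)),
      HasDerivWithinAt e (e' x) (Set.Icc (-π) (-(a * π))) x)
    (he' : ∀ x ∈ Set.Icc (-π) (-(a * π)),
      HasDerivWithinAt e' (e'' x) (Set.Icc (-π) (-(a * π))) x)
    (he'' : ∀ x ∈ Set.Icc (-π) (-(a * π)),
      HasDerivWithinAt e'' (e''' x) (Set.Icc (-π) (-(a * π))) x)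
    (he''' : ContinuousOn e''' (Set.Icc (-π) (-(a * π))))
    (hVolterra : ∀ x ∈ Set.Icc (-π) (-(a * π)),
      e''' x = e''' (-π) + lam * ∫ t in (-π)..x, p t * e t)
    (hb0 : e (-π) = 0) (hb2 : e'' (-π) = 0) (hpier : e (-(a * π)) = 0)
    (hnontriv : ¬ ∀ x ∈ Set.Icc (-π) (-(a * π)), e x = 0) :
    e' (-π) ≠ 0 ∧ e''' (-π) ≠ 0 := by
  have hpbd' : ∀ᵐ x ∂(volume.restrict (Icc (-π) (-(a * π)))), 0 ≤ p x ∧ p x ≤ β :=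
    hpbd.mono fun x hx => ⟨hα0.le.trans hx.1, hx.2⟩
  have hβ0 : 0 ≤ β := by linarith
  have hpos : ¬ (0 ≤ e' (-π) ∧ 0 ≤ e''' (-π)) := fun h =>
    hnontriv (beam_eq_zero_of_nonneg_initial hlam hβ0 hpmeas hpbd' he he' he'' hVolterra
      hb0.ge h.1 hb2.ge h.2 hpier)
  have hneg : ¬ (e' (-π) ≤ 0 ∧ e''' (-π) ≤ 0) := by
    intro h
    have hz := beam_eq_zero_of_nonneg_initial (e := fun x => -e x) (e' := fun x => -e' x)
      (e'' := fun x => -e'' x) (e''' := fun x => -e''' x) hlam hβ0 hpmeas hpbd'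
      (fun x hx => (he x hx).neg) (fun x hx => (he' x hx).neg) (fun x hx => (he'' x hx).neg)
      (fun x hx => by
        simp only [mul_neg, intervalIntegral.integral_neg]
        rw [hVolterra x hx]
        ring)
      (by simp [hb0]) (neg_nonneg.2 h.1) (by simp [hb2]) (neg_nonneg.2 h.2) (by simp [hpier])
    exact hnontriv fun x hx => neg_eq_zero.1 (hz x hx)
  constructor
  · intro h
    rcases le_total 0 (e''' (-π)) with h3 | h3
    · exact hpos ⟨h.ge, h3⟩
    · exact hneg ⟨h.le, h3⟩
  · intro h
    rcases le_total 0 (e' (-π)) with h1 | h1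
    · exact hpos ⟨h1, h.ge⟩
    · exact hneg ⟨h1, h.le⟩
end

section
/- Let 0 < a < 1, let 0 < α < 1 < β, let λ > 0, and let p : ℝ → ℝ be measurable with α ≤ p(x) ≤ β for a.e. x ∈ [−π, −aπ]. Suppose e₁, e₂ : ℝ → ℝ are each three times continuously differentiable on [−π, −aπ], each satisfies the Volterra identity eᵢ'''(x) = eᵢ'''(−π) + λ ∫_{−π}^{x} p(t) eᵢ(t) dt for all x ∈ [−π, −aπ], and each satisfies eᵢ(−π) = 0, eᵢ''(−π) = 0 and eᵢ(−aπ) = 0. Then e₁ and e₂ are linearly dependent on [−π, −aπ]: there exist constants (c₁, c₂) ≠ (0, 0) such that c₁ e₁(x) + c₂ e₂(x) = 0 for all x ∈ [−π, −aπ]. (In particular, every eigenvalue of the multi-point beam eigenvalue problem is simple.) -/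
open Real MeasureTheory Set Filter

/-- `e` solves `e'''' = lam * p * e` on `[l, b]` in Volterra form, with derivatives `e'`, `e''` and
`e'''`. -/
structure IsBeamSolution (p : ℝ → ℝ) (lam l b : ℝ) (e e' e'' e''' : ℝ → ℝ) : Prop where
  deriv_zero : ∀ x ∈ Icc l b, HasDerivWithinAt e (e' x) (Icc l b) x
  deriv_one : ∀ x ∈ Icc l b, HasDerivWithinAt e' (e'' x) (Icc l b) x
  deriv_two : ∀ x ∈ Icc l b, HasDerivWithinAt e'' (e''' x) (Icc l b) x
  continuousOn_three : ContinuousOn e''' (Icc l b)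
  volterra : ∀ x ∈ Icc l b, e''' x = e''' l + lam * ∫ t in l..x, p t * e t

namespace IsBeamSolution

variable {p : ℝ → ℝ} {lam l b : ℝ} {e e' e'' e''' : ℝ → ℝ}

theorem continuousOn (h : IsBeamSolution p lam l b e e' e'' e''') : ContinuousOn e (Icc l b) :=
  fun x hx => (h.deriv_zero x hx).continuousWithinAt

theorem intervalIntegrable_mul (h : IsBeamSolution p lam l b e e' e'' e''')
    (hp : IntegrableOn p (Icc l b)) {x : ℝ} (hx : x ∈ Icc l b) :
    IntervalIntegrable (fun t => p t * e t) volume l x := by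
  rw [intervalIntegrable_iff_integrableOn_Icc_of_le hx.1]
  exact (hp.mul_continuousOn h.continuousOn isCompact_Icc).mono_set (Icc_subset_Icc_right hx.2)

theorem linear_combination {f f' f'' f''' : ℝ → ℝ} (he : IsBeamSolution p lam l b e e' e'' e''')
    (hf : IsBeamSolution p lam l b f f' f'' f''') (hp : IntegrableOn p (Icc l b)) (c d : ℝ) :
    IsBeamSolution p lam l b (fun x => c * e x + d * f x) (fun x => c * e' x + d * f' x)
      (fun x => c * e'' x + d * f'' x) (fun x => c * e''' x + d * f''' x) where
  deriv_zero x hx := ((he.deriv_zero x hx).const_mul c).add ((hf.deriv_zero x hx).const_mul d)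
  deriv_one x hx := ((he.deriv_one x hx).const_mul c).add ((hf.deriv_one x hx).const_mul d)
  deriv_two x hx := ((he.deriv_two x hx).const_mul c).add ((hf.deriv_two x hx).const_mul d)
  continuousOn_three := (he.continuousOn_three.const_mul c).add (hf.continuousOn_three.const_mul d)
  volterra x hx := by
    have hint : ∫ t in l..x, p t * (c * e t + d * f t) =
        c * (∫ t in l..x, p t * e t) + d * ∫ t in l..x, p t * f t := by
      rw [← intervalIntegral.integral_const_mul, ← intervalIntegral.integral_const_mul,
        ← intervalIntegral.integral_add ((he.intervalIntegrable_mul hp hx).const_mul c)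
          ((hf.intervalIntegrable_mul hp hx).const_mul d)]
      congr 1 with t
      ring
    rw [hint, he.volterra x hx, hf.volterra x hx]
    ring

end IsBeamSolution

theorem pos_of_hasDerivWithinAt_pos {f f' : ℝ → ℝ} {l b c : ℝ}
    (hf : ∀ x ∈ Icc l b, HasDerivWithinAt f (f' x) (Icc l b) x) (hl : f l = 0) (hcb : c ≤ b)
    (hpos : ∀ x ∈ Ioo l c, 0 < f' x) : ∀ x ∈ Ioc l c, 0 < f x := by
  intro x hx
  have hmono : StrictMonoOn f (Icc l c) := by
    apply strictMonoOn_of_deriv_pos (convex_Icc l c)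
    · exact fun y hy => ((hf y ⟨hy.1, hy.2.trans hcb⟩).continuousWithinAt).mono
        (Icc_subset_Icc_right hcb)
    · intro y hy
      rw [interior_Icc] at hy
      have hd := (hf y ⟨hy.1.le, hy.2.le.trans hcb⟩).hasDerivAt
        (Icc_mem_nhds hy.1 (hy.2.trans_le hcb))
      rw [hd.deriv]
      exact hpos y hy
  rw [← hl]
  exact hmono ⟨le_rfl, hx.1.le.trans hx.2⟩ ⟨hx.1.le, hx.2⟩ hx.1

namespace IsBeamSolution

variable {p : ℝ → ℝ} {lam l b β : ℝ} {e e' e'' e''' : ℝ → ℝ}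

theorem pos_of_third_pos (h : IsBeamSolution p lam l b e e' e'' e''') (h0 : e l = 0)
    (h1 : e' l = 0) (h2 : e'' l = 0) {c : ℝ} (hc : c ≤ b) (h3 : ∀ x ∈ Ioo l c, 0 < e''' x) :
    ∀ x ∈ Ioc l c, 0 < e x := by
  have h2' := pos_of_hasDerivWithinAt_pos h.deriv_two h2 hc h3
  have h1' := pos_of_hasDerivWithinAt_pos h.deriv_one h1 hc
    fun x hx => h2' x (Ioo_subset_Ioc_self hx)
  exact pos_of_hasDerivWithinAt_pos h.deriv_zero h0 hc fun x hx => h1' x (Ioo_subset_Ioc_self hx)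

/-- A solution with vanishing data up to second order and positive third derivative at the left
end stays positive. -/
theorem pos_of_initial_third_pos (h : IsBeamSolution p lam l b e e' e'' e''') (hlam : 0 ≤ lam)
    (hp : ∀ᵐ x ∂(volume.restrict (Icc l b)), 0 ≤ p x) (h0 : e l = 0) (h1 : e' l = 0)
    (h2 : e'' l = 0) (h3 : 0 < e''' l) : ∀ x ∈ Ioc l b, 0 < e x := by
  refine h.pos_of_third_pos h0 h1 h2 le_rfl fun y hy => ?_
  by_contra! hneg
  have hcomp : IsCompact (Icc l b ∩ e''' ⁻¹' Iic 0) :=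
    isCompact_Icc.of_isClosed_subset
      (h.continuousOn_three.preimage_isClosed_of_isClosed isClosed_Icc isClosed_Iic)
      inter_subset_left
  obtain ⟨z, ⟨hz, hz3⟩, hmin⟩ := hcomp.exists_isLeast ⟨y, ⟨hy.1.le, hy.2.le⟩, hneg⟩
  have hpos := h.pos_of_third_pos h0 h1 h2 hz.2 fun x hx => by
    by_contra! hx3
    exact (hmin ⟨⟨hx.1.le, hx.2.le.trans hz.2⟩, hx3⟩).not_gt hx.2
  have hint : 0 ≤ ∫ t in l..z, p t * e t := by
    rw [intervalIntegral.integral_of_le hz.1]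
    apply integral_nonneg_of_ae
    have hsub : Ioc l z ⊆ Icc l b := fun x hx => ⟨hx.1.le, hx.2.trans hz.2⟩
    filter_upwards [ae_restrict_of_ae_restrict_of_subset hsub hp,
      ae_restrict_mem measurableSet_Ioc] with t ht htmem
    exact mul_nonneg ht (hpos t htmem).le
  have hv := h.volterra z hz
  have hz3' : e''' z ≤ 0 := hz3
  nlinarith [mul_nonneg hlam hint]

/-- Uniqueness for the initial value problem with zero data. -/
theorem eq_zero_of_initial_eq_zero (h : IsBeamSolution p lam l b e e' e'' e''') (hlam : 0 ≤ lam)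
    (hp : ∀ᵐ x ∂(volume.restrict (Icc l b)), |p x| ≤ β) (h0 : e l = 0) (h1 : e' l = 0)
    (h2 : e'' l = 0) (h3 : e''' l = 0) : ∀ x ∈ Icc l b, e x = 0 := by
  set F : ℝ → ℝ := fun x => ∫ t in l..x, |e t| with hF
  have hcont : ContinuousOn (fun t => |e t|) (Icc l b) := h.continuousOn.abs
  have hFderiv : ∀ x ∈ Icc l b, HasDerivWithinAt F (|e x|) (Icc l b) x := by
    intro x hx
    have : Fact (x ∈ Icc l b) := ⟨hx⟩
    refine intervalIntegral.integral_hasDerivWithinAt_right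
      ((hcont.mono (Icc_subset_Icc_right hx.2)).intervalIntegrable_of_Icc hx.1)
      (hcont.stronglyMeasurableAtFilter_nhdsWithin measurableSet_Icc x) (hcont x hx)
  have hbound : ∀ x ∈ Icc l b, |e''' x| ≤ lam * β * F x := by
    intro x hx
    have hsub : Ioc l x ⊆ Icc l b := fun t ht => ⟨ht.1.le, ht.2.trans hx.2⟩
    have hle : ‖∫ t in l..x, p t * e t‖ ≤ ∫ t in l..x, β * |e t| := by
      refine intervalIntegral.norm_integral_le_of_norm_le hx.1 ?_
        (((hcont.mono (Icc_subset_Icc_right hx.2)).intervalIntegrable_of_Icc hx.1).const_mul β)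
      rw [← ae_restrict_iff' measurableSet_Ioc]
      filter_upwards [ae_restrict_of_ae_restrict_of_subset hsub hp] with t ht
      rw [norm_mul, norm_eq_abs, norm_eq_abs]
      exact mul_le_mul_of_nonneg_right ht (abs_nonneg _)
    rw [intervalIntegral.integral_const_mul, norm_eq_abs] at hle
    rw [h.volterra x hx, h3, zero_add, abs_mul, abs_of_nonneg hlam, mul_assoc]
    exact mul_le_mul_of_nonneg_left hle hlam
  set v : ℝ → ℝ × ℝ × ℝ × ℝ := fun x => (e x, e' x, e'' x, F x) with hv
  have hvderiv : ∀ x ∈ Icc l b,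
      HasDerivWithinAt v (e' x, e'' x, e''' x, |e x|) (Icc l b) x := fun x hx =>
    (h.deriv_zero x hx).prodMk ((h.deriv_one x hx).prodMk
      ((h.deriv_two x hx).prodMk (hFderiv x hx)))
  have hv0 : v l = 0 := by simp [hv, hF, h0, h1, h2]
  have hvzero : ∀ x ∈ Icc l b, v x = 0 := by
    refine eq_zero_of_abs_deriv_le_mul_abs_self_of_eq_zero_right (K := max 1 |lam * β|)
      (f' := fun x => (e' x, e'' x, e''' x, |e x|))
      (fun x hx => (hvderiv x hx).continuousWithinAt)
      (fun x hx => (hvderiv x (Ico_subset_Icc_self hx)).mono_of_mem_nhdsWithin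
        (Icc_mem_nhdsGE_of_mem hx)) hv0 fun x hx => ?_
    have hK1 : (1 : ℝ) ≤ max 1 |lam * β| := le_max_left _ _
    have hself : ‖v x‖ ≤ max 1 |lam * β| * ‖v x‖ := le_mul_of_one_le_left (norm_nonneg _) hK1
    have hn0 : |e x| ≤ ‖v x‖ := norm_fst_le (v x)
    have hn1 : |e' x| ≤ ‖v x‖ := (norm_fst_le (v x).2).trans (norm_snd_le _)
    have hn2 : |e'' x| ≤ ‖v x‖ :=
      ((norm_fst_le (v x).2.2).trans (norm_snd_le _)).trans (norm_snd_le _)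
    have hn3 : |F x| ≤ ‖v x‖ :=
      ((norm_snd_le (v x).2.2).trans (norm_snd_le _)).trans (norm_snd_le _)
    have he3 : |e''' x| ≤ max 1 |lam * β| * ‖v x‖ := by
      refine (hbound x (Ico_subset_Icc_self hx)).trans ((le_abs_self _).trans ?_)
      rw [abs_mul]
      exact mul_le_mul (le_max_right _ _) hn3 (abs_nonneg _) (zero_le_one.trans hK1)
    refine norm_prod_le_iff.2 ⟨hn1.trans hself, norm_prod_le_iff.2 ⟨hn2.trans hself,
      norm_prod_le_iff.2 ⟨he3, ?_⟩⟩⟩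
    rw [norm_eq_abs, abs_abs]
    exact hn0.trans hself
  exact fun x hx => congrArg Prod.fst (hvzero x hx)

/-- A solution vanishing to second order at the left end and vanishing at the right end is zero. -/
theorem eq_zero_of_right_eq_zero (h : IsBeamSolution p lam l b e e' e'' e''') (hlb : l < b)
    (hlam : 0 ≤ lam) (hpint : IntegrableOn p (Icc l b))
    (hp : ∀ᵐ x ∂(volume.restrict (Icc l b)), 0 ≤ p x ∧ p x ≤ β) (h0 : e l = 0) (h1 : e' l = 0)
    (h2 : e'' l = 0) (hb : e b = 0) : ∀ x ∈ Icc l b, e x = 0 := by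
  have hp0 : ∀ᵐ x ∂(volume.restrict (Icc l b)), 0 ≤ p x := hp.mono fun _ hx => hx.1
  rcases lt_trichotomy (e''' l) 0 with h3 | h3 | h3
  · have hneg := (h.linear_combination h hpint (-1) 0).pos_of_initial_third_pos hlam hp0
      (by simp [h0]) (by simp [h1]) (by simp [h2]) (by simpa using h3) b ⟨hlb, le_rfl⟩
    simp [hb] at hneg
  · exact h.eq_zero_of_initial_eq_zero hlam
      (hp.mono fun _ hx => (abs_of_nonneg hx.1).trans_le hx.2) h0 h1 h2 h3
  · exact absurd hb (h.pos_of_initial_third_pos hlam hp0 h0 h1 h2 h3 b ⟨hlb, le_rfl⟩).ne'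

end IsBeamSolution

/-- Simplicity of the eigenvalues of the multi-point beam problem: two
solutions of `e'''' = λ p e` (in Volterra form) on the left span
`[-π, -aπ]` satisfying the hinged conditions `e(-π) = e''(-π) = 0` and the
pier condition `e(-aπ) = 0` are linearly dependent there. -/
theorem stmt3 (a α β lam : ℝ) (ha0 : 0 < a) (ha1 : a < 1)
    (hα0 : 0 < α) (hα1 : α < 1) (hβ : 1 < β) (hlam : 0 < lam)
    (p : ℝ → ℝ) (hpmeas : Measurable p)
    (hpbd : ∀ᵐ x ∂(volume.restrict (Set.Icc (-π) (-(a * π)))), α ≤ p x ∧ p x ≤ β)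
    (e₁ e₁' e₁'' e₁''' e₂ e₂' e₂'' e₂''' : ℝ → ℝ)
    (he₁ : ∀ x ∈ Set.Icc (-π) (-(a * π)),
      HasDerivWithinAt e₁ (e₁' x) (Set.Icc (-π) (-(a * π))) x)
    (he₁' : ∀ x ∈ Set.Icc (-π) (-(a * π)),
      HasDerivWithinAt e₁' (e₁'' x) (Set.Icc (-π) (-(a * π))) x)
    (he₁'' : ∀ x ∈ Set.Icc (-π) (-(a * π)),
      HasDerivWithinAt e₁'' (e₁''' x) (Set.Icc (-π) (-(a * π))) x)
    (he₁''' : ContinuousOn e₁''' (Set.Icc (-π) (-(a * π))))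
    (hVolterra₁ : ∀ x ∈ Set.Icc (-π) (-(a * π)),
      e₁''' x = e₁''' (-π) + lam * ∫ t in (-π)..x, p t * e₁ t)
    (hb₁0 : e₁ (-π) = 0) (hb₁2 : e₁'' (-π) = 0) (hpier₁ : e₁ (-(a * π)) = 0)
    (he₂ : ∀ x ∈ Set.Icc (-π) (-(a * π)),
      HasDerivWithinAt e₂ (e₂' x) (Set.Icc (-π) (-(a * π))) x)
    (he₂' : ∀ x ∈ Set.Icc (-π) (-(a * π)),
      HasDerivWithinAt e₂' (e₂'' x) (Set.Icc (-π) (-(a * π))) x)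
    (he₂'' : ∀ x ∈ Set.Icc (-π) (-(a * π)),
      HasDerivWithinAt e₂'' (e₂''' x) (Set.Icc (-π) (-(a * π))) x)
    (he₂''' : ContinuousOn e₂''' (Set.Icc (-π) (-(a * π))))
    (hVolterra₂ : ∀ x ∈ Set.Icc (-π) (-(a * π)),
      e₂''' x = e₂''' (-π) + lam * ∫ t in (-π)..x, p t * e₂ t)
    (hb₂0 : e₂ (-π) = 0) (hb₂2 : e₂'' (-π) = 0) (hpier₂ : e₂ (-(a * π)) = 0) :
    ∃ c₁ c₂ : ℝ, ¬ (c₁ = 0 ∧ c₂ = 0) ∧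
      ∀ x ∈ Set.Icc (-π) (-(a * π)), c₁ * e₁ x + c₂ * e₂ x = 0 := by
  have hlb : -π < -(a * π) := by nlinarith [pi_pos]
  have hp : ∀ᵐ x ∂(volume.restrict (Icc (-π) (-(a * π)))), 0 ≤ p x ∧ p x ≤ β :=
    hpbd.mono fun _ hx => ⟨hα0.le.trans hx.1, hx.2⟩
  have hpint : IntegrableOn p (Icc (-π) (-(a * π))) :=
    Measure.integrableOn_of_bounded (M := β) (by simp) hpmeas.aestronglyMeasurable
      (hp.mono fun _ hx => (abs_of_nonneg hx.1).trans_le hx.2)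
  have h₁ : IsBeamSolution p lam (-π) (-(a * π)) e₁ e₁' e₁'' e₁''' :=
    ⟨he₁, he₁', he₁'', he₁''', hVolterra₁⟩
  have h₂ : IsBeamSolution p lam (-π) (-(a * π)) e₂ e₂' e₂'' e₂''' :=
    ⟨he₂, he₂', he₂'', he₂''', hVolterra₂⟩
  obtain ⟨c₁, c₂, hc, hslope⟩ :
      ∃ c₁ c₂ : ℝ, ¬ (c₁ = 0 ∧ c₂ = 0) ∧ c₁ * e₁' (-π) + c₂ * e₂' (-π) = 0 := by
    by_cases hz : e₁' (-π) = 0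
    · exact ⟨1, 0, by simp, by simp [hz]⟩
    · exact ⟨e₂' (-π), -e₁' (-π), by simp [hz], by ring⟩
  exact ⟨c₁, c₂, hc, (h₁.linear_combination h₂ hpint c₁ c₂).eq_zero_of_right_eq_zero hlb hlam.le
    hpint hp (by simp [hb₁0, hb₂0]) hslope (by simp [hb₁2, hb₂2]) (by simp [hpier₁, hpier₂])⟩
end

section
/- Let 0 < a < 1, let 0 < α < 1 < β, let λ > 0, and let p : ℝ → ℝ be measurable with α ≤ p(x) ≤ β for a.e. x ∈ [0, aπ]. Suppose e : ℝ → ℝ is three times continuously differentiable on [0, aπ] and satisfies e'''(x) = λ ∫_{0}^{x} p(t) e(t) dt for all x ∈ [0, aπ] (so in particular e'''(0) = 0), together with e'(0) = 0 and e(aπ) = 0. If e is not identically zero on [0, aπ], then e(0) ≠ 0 and e(0)·e''(0) < 0. -/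
open Real MeasureTheory Set Filter

/-- A function with nonnegative derivative on `[0, L]` is monotone there. -/
lemma monotoneOn_Icc_of_hasDerivWithinAt_nonneg_s4 {L : ℝ} {f f' : ℝ → ℝ}
    (hf : ∀ x ∈ Icc 0 L, HasDerivWithinAt f (f' x) (Icc 0 L) x)
    (hnonneg : ∀ x ∈ Icc 0 L, 0 ≤ f' x) : MonotoneOn f (Icc 0 L) :=
  monotoneOn_of_hasDerivWithinAt_nonneg (convex_Icc 0 L)
    (fun y hy => (hf y hy).continuousWithinAt)
    (fun y hy => (hf y (interior_subset hy)).mono interior_subset)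
    (fun y hy => hnonneg y (interior_subset hy))

/-- A function with nonnegative derivative on `[0, L]` is bounded below by its initial value. -/
lemma initial_le_of_hasDerivWithinAt_nonneg {L : ℝ} {f f' : ℝ → ℝ}
    (hf : ∀ x ∈ Icc 0 L, HasDerivWithinAt f (f' x) (Icc 0 L) x)
    (hnonneg : ∀ x ∈ Icc 0 L, 0 ≤ f' x) {x : ℝ} (hx : x ∈ Icc 0 L) : f 0 ≤ f x :=
  monotoneOn_Icc_of_hasDerivWithinAt_nonneg_s4 hf hnonneg ⟨le_rfl, hx.1.trans hx.2⟩ hx hx.1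

lemma hasDerivAt_const_mul_exp_mul (c κ x : ℝ) :
    HasDerivAt (fun x => c * exp (κ * x)) (c * κ * exp (κ * x)) x := by
  have h := ((hasDerivAt_const_mul κ (x := x)).exp).const_mul c
  rwa [mul_comm (exp _), ← mul_assoc] at h

/-- A bounded weight times a continuous function is interval integrable. -/
lemma intervalIntegrable_weight_mul {L α β : ℝ} {p e : ℝ → ℝ} (hp : Measurable p)
    (hbd : ∀ᵐ x ∂(volume.restrict (Icc 0 L)), α ≤ p x ∧ p x ≤ β)
    (he : ContinuousOn e (Icc 0 L)) {x : ℝ} (hx : x ∈ Icc 0 L) :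
    IntervalIntegrable (fun t => p t * e t) volume 0 x := by
  have hint : IntegrableOn (fun t => p t * e t) (Icc 0 L) := by
    refine Integrable.bdd_mul (c := max |α| |β|) he.integrableOn_Icc
      hp.aestronglyMeasurable ?_
    filter_upwards [hbd] with t ht
    exact abs_le_max_abs_abs ht.1 ht.2
  rw [intervalIntegrable_iff_integrableOn_Ioc_of_le hx.1]
  exact hint.mono_set fun t ht => ⟨ht.1.le, ht.2.trans hx.2⟩

/-- If `e ≥ -ε exp (κ x)` on `[0, L]`, then the weighted primitive of `e` is bounded below by that
of the barrier `-β ε exp (κ x)`. -/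
lemma neg_barrier_le_integral {L α β ε κ : ℝ} {p e : ℝ → ℝ} (hα : 0 < α) (hβ : 0 < β)
    (hε : 0 ≤ ε) (hκ : 0 < κ) (hp : Measurable p)
    (hbd : ∀ᵐ x ∂(volume.restrict (Icc 0 L)), α ≤ p x ∧ p x ≤ β)
    (he : ContinuousOn e (Icc 0 L))
    (hlow : ∀ x ∈ Icc 0 L, -(ε * exp (κ * x)) ≤ e x) {x : ℝ} (hx : x ∈ Icc 0 L) :
    -(β * ε * exp (κ * x)) ≤ κ * ∫ t in (0 : ℝ)..x, p t * e t := by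
  have hcont : Continuous fun t : ℝ => -(β * ε) * (κ * exp (κ * t)) := by fun_prop
  have hprim : ∫ t in (0 : ℝ)..x, -(β * ε) * (κ * exp (κ * t))
      = -(β * ε) * exp (κ * x) - -(β * ε) * exp (κ * 0) := by
    refine intervalIntegral.integral_eq_sub_of_hasDerivAt
      (f := fun t => -(β * ε) * exp (κ * t)) (fun t _ => ?_) (hcont.intervalIntegrable 0 x)
    simpa only [mul_assoc] using hasDerivAt_const_mul_exp_mul (-(β * ε)) κ t
  have hint := intervalIntegrable_weight_mul hp hbd he hx
  have hle : ∫ t in (0 : ℝ)..x, -(β * ε) * (κ * exp (κ * t))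
      ≤ ∫ t in (0 : ℝ)..x, κ * (p t * e t) := by
    refine intervalIntegral.integral_mono_ae_restrict hx.1 (hcont.intervalIntegrable 0 x)
      (hint.const_mul κ) ?_
    have hsub : Icc 0 x ⊆ Icc 0 L := Icc_subset_Icc_right hx.2
    filter_upwards [ae_restrict_of_ae_restrict_of_subset hsub hbd,
      ae_restrict_mem measurableSet_Icc] with t ht htmem
    have hlt := hlow t (hsub htmem)
    have key : -(β * (ε * exp (κ * t))) ≤ p t * e t := by
      rcases le_total 0 (e t) with h0 | h0
      · have h1 : 0 ≤ p t * e t := mul_nonneg (hα.le.trans ht.1) h0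
        have h2 : 0 ≤ β * (ε * exp (κ * t)) := by positivity
        linarith
      · have h1 : β * e t ≤ p t * e t := mul_le_mul_of_nonpos_right ht.2 h0
        have h2 := mul_le_mul_of_nonneg_left hlt hβ.le
        linarith
    have := mul_le_mul_of_nonneg_left key hκ.le
    linarith
  rw [hprim, intervalIntegral.integral_const_mul] at hle
  have : 0 ≤ β * ε := by positivity
  simp only [mul_zero, exp_zero] at hle
  linarith

/-- Positivity for the Volterra problem: nonnegative data `e 0`, `e'' 0` and `e' 0 = 0` give a
nonnegative solution. -/
lemma nonneg_of_volterra {L α β lam : ℝ} (hL : 0 ≤ L) (hα : 0 < α) (hβ : 0 < β)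
    (hlam : 0 < lam) {p : ℝ → ℝ} (hp : Measurable p)
    (hbd : ∀ᵐ x ∂(volume.restrict (Icc 0 L)), α ≤ p x ∧ p x ≤ β) {e e' e'' e''' : ℝ → ℝ}
    (he : ∀ x ∈ Icc 0 L, HasDerivWithinAt e (e' x) (Icc 0 L) x)
    (he' : ∀ x ∈ Icc 0 L, HasDerivWithinAt e' (e'' x) (Icc 0 L) x)
    (he'' : ∀ x ∈ Icc 0 L, HasDerivWithinAt e'' (e''' x) (Icc 0 L) x)
    (hVolterra : ∀ x ∈ Icc 0 L, e''' x = lam * ∫ t in (0 : ℝ)..x, p t * e t)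
    (h0 : 0 ≤ e 0) (h0' : e' 0 = 0) (h0'' : 0 ≤ e'' 0) :
    ∀ x ∈ Icc 0 L, 0 ≤ e x := by
  have hcont : ContinuousOn e (Icc 0 L) := fun y hy => (he y hy).continuousWithinAt
  obtain ⟨κ, hκ, hκlam⟩ : ∃ κ : ℝ, 0 < κ ∧ lam * β ≤ κ ^ 4 := by
    have hpos : 0 < lam * β := by positivity
    refine ⟨1 + lam * β, by linarith, ?_⟩
    have := le_self_pow₀ (show 1 ≤ 1 + lam * β by linarith) (show 4 ≠ 0 by norm_num)
    linarith
  -- Touch `e` from below by the largest barrier `-ε exp (κ x)`.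
  obtain ⟨z, hz, hmin⟩ := isCompact_Icc.exists_isMinOn (nonempty_Icc.2 hL)
    (hcont.mul (show Continuous fun x : ℝ => exp (-(κ * x)) by fun_prop).continuousOn)
  have hquot : ∀ x ∈ Icc 0 L, e z * exp (-(κ * z)) ≤ e x * exp (-(κ * x)) :=
    fun x hx => hmin hx
  obtain ⟨ε, hεdef⟩ : ∃ ε, ε = -(e z * exp (-(κ * z))) := ⟨_, rfl⟩
  have hcancel : ∀ x, e x * exp (-(κ * x)) * exp (κ * x) = e x := fun x => by
    rw [mul_assoc, ← exp_add]; simp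
  have hlow : ∀ x ∈ Icc 0 L, -(ε * exp (κ * x)) ≤ e x := fun x hx => by
    have h := mul_le_mul_of_nonneg_right (hquot x hx) (exp_pos (κ * x)).le
    rw [hcancel] at h
    rw [hεdef]; linarith
  have hε : ε ≤ 0 := by
    by_contra! hε
    have hexp : ∀ (c x : ℝ), HasDerivWithinAt (fun x => c * exp (κ * x))
        (c * κ * exp (κ * x)) (Icc 0 L) x := fun c x =>
      (hasDerivAt_const_mul_exp_mul c κ x).hasDerivWithinAt
    have h3 : ∀ x ∈ Icc 0 L, 0 ≤ e''' x + ε * κ * κ * κ * exp (κ * x) := fun x hx => by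
      have hI := neg_barrier_le_integral hα hβ hε.le hκ hp hbd hcont hlow hx
      rw [hVolterra x hx]
      have h1 := mul_le_mul_of_nonneg_left hI hlam.le
      have h2 := mul_le_mul_of_nonneg_right hκlam (mul_pos hε (exp_pos (κ * x))).le
      refine nonneg_of_mul_nonneg_right (a := κ) ?_ hκ
      linarith
    have hκε : 0 < ε * κ := by positivity
    have hκκε : 0 < ε * κ * κ := by positivity
    have h2 : ∀ x ∈ Icc 0 L, 0 ≤ e'' x + ε * κ * κ * exp (κ * x) := fun x hx => by
      have h := initial_le_of_hasDerivWithinAt_nonneg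
        (fun y hy => (he'' y hy).add (hexp (ε * κ * κ) y)) h3 hx
      simp only [Pi.add_apply, mul_zero, exp_zero] at h
      linarith
    have h1 : ∀ x ∈ Icc 0 L, 0 ≤ e' x + ε * κ * exp (κ * x) := fun x hx => by
      have h := initial_le_of_hasDerivWithinAt_nonneg
        (fun y hy => (he' y hy).add (hexp (ε * κ) y)) h2 hx
      simp only [Pi.add_apply, mul_zero, exp_zero] at h
      linarith
    have h := initial_le_of_hasDerivWithinAt_nonneg
      (fun y hy => (he y hy).add (hexp ε y)) h1 hz
    have hcz := hcancel z
    rw [show e z * exp (-(κ * z)) = -ε by rw [hεdef]; ring] at hcz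
    simp only [Pi.add_apply, mul_zero, exp_zero] at h
    linarith
  intro x hx
  have := mul_nonneg (neg_nonneg.2 hε) (exp_pos (κ * x)).le
  linarith [hlow x hx]

/-- A solution of the Volterra problem with nonnegative `e 0`, `e'' 0`, vanishing `e' 0` and
vanishing at the right endpoint is identically zero. -/
lemma eq_zero_of_volterra {L α β lam : ℝ} (hL : 0 ≤ L) (hα : 0 < α) (hβ : 0 < β)
    (hlam : 0 < lam) {p : ℝ → ℝ} (hp : Measurable p)
    (hbd : ∀ᵐ x ∂(volume.restrict (Icc 0 L)), α ≤ p x ∧ p x ≤ β) {e e' e'' e''' : ℝ → ℝ}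
    (he : ∀ x ∈ Icc 0 L, HasDerivWithinAt e (e' x) (Icc 0 L) x)
    (he' : ∀ x ∈ Icc 0 L, HasDerivWithinAt e' (e'' x) (Icc 0 L) x)
    (he'' : ∀ x ∈ Icc 0 L, HasDerivWithinAt e'' (e''' x) (Icc 0 L) x)
    (hVolterra : ∀ x ∈ Icc 0 L, e''' x = lam * ∫ t in (0 : ℝ)..x, p t * e t)
    (h0 : 0 ≤ e 0) (h0' : e' 0 = 0) (h0'' : 0 ≤ e'' 0) (hend : e L = 0) :
    ∀ x ∈ Icc 0 L, e x = 0 := by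
  have hnonneg := nonneg_of_volterra hL hα hβ hlam hp hbd he he' he'' hVolterra h0 h0' h0''
  have h3 : ∀ x ∈ Icc 0 L, 0 ≤ e''' x := fun x hx => by
    rw [hVolterra x hx]
    refine mul_nonneg hlam.le (intervalIntegral.integral_nonneg_of_ae_restrict hx.1 ?_)
    have hsub : Icc 0 x ⊆ Icc 0 L := Icc_subset_Icc_right hx.2
    filter_upwards [ae_restrict_of_ae_restrict_of_subset hsub hbd,
      ae_restrict_mem measurableSet_Icc] with t ht htmem
    exact mul_nonneg (hα.le.trans ht.1) (hnonneg t (hsub htmem))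
  have h2 : ∀ x ∈ Icc 0 L, 0 ≤ e'' x := fun x hx =>
    h0''.trans (initial_le_of_hasDerivWithinAt_nonneg he'' h3 hx)
  have h1 : ∀ x ∈ Icc 0 L, 0 ≤ e' x := fun x hx =>
    h0'.ge.trans (initial_le_of_hasDerivWithinAt_nonneg he' h2 hx)
  exact fun x hx => le_antisymm
    ((monotoneOn_Icc_of_hasDerivWithinAt_nonneg_s4 he h1 hx (right_mem_Icc.2 hL) hx.2).trans_eq hend)
    (hnonneg x hx)

/-- An even eigenfunction of the weighted beam problem, restricted to the
half middle span `[0, aπ]` (so that `e'(0) = e'''(0) = 0` and `e(aπ) = 0`),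
if nontrivial, satisfies `e(0) ≠ 0` and `e(0) e''(0) < 0`. -/
theorem stmt4 (a α β lam : ℝ) (ha0 : 0 < a) (ha1 : a < 1)
    (hα0 : 0 < α) (hα1 : α < 1) (hβ : 1 < β) (hlam : 0 < lam)
    (p : ℝ → ℝ) (hpmeas : Measurable p)
    (hpbd : ∀ᵐ x ∂(volume.restrict (Set.Icc 0 (a * π))), α ≤ p x ∧ p x ≤ β)
    (e e' e'' e''' : ℝ → ℝ)
    (he : ∀ x ∈ Set.Icc 0 (a * π), HasDerivWithinAt e (e' x) (Set.Icc 0 (a * π)) x)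
    (he' : ∀ x ∈ Set.Icc 0 (a * π), HasDerivWithinAt e' (e'' x) (Set.Icc 0 (a * π)) x)
    (he'' : ∀ x ∈ Set.Icc 0 (a * π), HasDerivWithinAt e'' (e''' x) (Set.Icc 0 (a * π)) x)
    (he''' : ContinuousOn e''' (Set.Icc 0 (a * π)))
    (hVolterra : ∀ x ∈ Set.Icc 0 (a * π),
      e''' x = lam * ∫ t in (0 : ℝ)..x, p t * e t)
    (hb1 : e' 0 = 0) (hpier : e (a * π) = 0)
    (hnontriv : ¬ ∀ x ∈ Set.Icc 0 (a * π), e x = 0) :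
    e 0 ≠ 0 ∧ e 0 * e'' 0 < 0 := by
  have hL : 0 ≤ a * π := by positivity
  have hβ0 : 0 < β := by linarith
  have hneg : e 0 * e'' 0 < 0 := by
    by_contra! hprod
    rcases mul_nonneg_iff.1 hprod with ⟨h0, h2⟩ | ⟨h0, h2⟩
    · exact hnontriv (eq_zero_of_volterra hL hα0 hβ0 hlam hpmeas hpbd he he' he'' hVolterra
        h0 hb1 h2 hpier)
    · have hzero := eq_zero_of_volterra (e := -e) (e' := -e') (e'' := -e'') (e''' := -e''')
        hL hα0 hβ0 hlam hpmeas hpbd (fun x hx => (he x hx).neg) (fun x hx => (he' x hx).neg)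
        (fun x hx => (he'' x hx).neg) (fun x hx => by simp [hVolterra x hx])
        (by simpa using h0) (by simpa using hb1) (by simpa using h2) (by simpa using hpier)
      exact hnontriv fun x hx => by simpa using hzero x hx
  exact ⟨fun h => by simp [h] at hneg, hneg⟩
end

section
/- Let λ, ν > 0 with λ < ν and let ζ > √(2(ν − λ)). Let W : ℝ → ℝ be twice differentiable with W''(t) + λ W(t) + W(t)³ = 0 for all t, W(0) = ζ and W'(0) = 0. Then there exists a twice differentiable function ξ : ℝ → ℝ satisfying the Hill equation ξ''(t) + (ν + W(t)²) ξ(t) = 0 for all t ≥ 0 which is unbounded on [0, ∞). -/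
open Real MeasureTheory Set Filter

/-- Uniqueness to the right for the Cauchy problem `y'' + q y = 0`, `y 0 = y' 0 = 0`. -/
lemma secondOrder_eq_zero_right {q y z : ℝ → ℝ} {R : ℝ} (hq : Continuous q)
    (hy : ∀ t ∈ Ico 0 R, HasDerivAt y (z t) t)
    (hz : ∀ t ∈ Ico 0 R, HasDerivAt z (-(q t) * y t) t)
    (hy0 : y 0 = 0) (hz0 : z 0 = 0) : ∀ t ∈ Ico 0 R, y t = 0 ∧ z t = 0 := by
  intro t ht
  obtain ⟨K, hK⟩ := isCompact_Icc.exists_bound_of_continuousOn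
    (s := Icc 0 t) (f := q) hq.continuousOn
  have hmem : ∀ s ∈ Icc 0 t, s ∈ Ico 0 R := fun s hs => ⟨hs.1, hs.2.trans_lt ht.2⟩
  have hder : ∀ s ∈ Icc 0 t, HasDerivAt (fun s => (y s ^ 2 + z s ^ 2) * exp (-(1 + K) * s))
      ((2 * y s * z s - 2 * q s * y s * z s - (1 + K) * (y s ^ 2 + z s ^ 2))
        * exp (-(1 + K) * s)) s := by
    intro s hs
    have he : HasDerivAt (fun s => exp (-(1 + K) * s)) (exp (-(1 + K) * s) * (-(1 + K))) s := by
      simpa using ((hasDerivAt_id s).const_mul (-(1 + K))).exp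
    refine (((((hy s (hmem s hs)).pow 2).add ((hz s (hmem s hs)).pow 2)).mul he)).congr_deriv ?_
    simp only [Pi.add_apply, Pi.pow_apply]
    push_cast
    ring
  have hanti : AntitoneOn (fun s => (y s ^ 2 + z s ^ 2) * exp (-(1 + K) * s)) (Icc 0 t) := by
    refine antitoneOn_of_deriv_nonpos (convex_Icc 0 t)
      (fun s hs => (hder s hs).continuousAt.continuousWithinAt)
      (fun s hs => (hder s (interior_subset hs)).differentiableAt.differentiableWithinAt) ?_
    intro s hs
    have hs' := interior_subset hs
    rw [(hder s hs').deriv]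
    refine mul_nonpos_of_nonpos_of_nonneg ?_ (exp_pos _).le
    have hb := abs_le.1 (hK s hs')
    nlinarith [mul_nonneg (by linarith : 0 ≤ K + q s) (sq_nonneg (y s - z s)),
      mul_nonneg (by linarith : 0 ≤ K - q s) (sq_nonneg (y s + z s)),
      sq_nonneg (y s - z s), sq_nonneg (y s + z s)]
  have h0 := hanti (left_mem_Icc.2 ht.1) (right_mem_Icc.2 ht.1) ht.1
  simp only [hy0, hz0] at h0
  have h1 : y t ^ 2 + z t ^ 2 ≤ 0 := by
    by_contra hcon
    have := mul_pos (not_le.1 hcon) (exp_pos (-(1 + K) * t))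
    norm_num at h0
    norm_num at this
    linarith
  exact ⟨by nlinarith [sq_nonneg (y t), sq_nonneg (z t)],
    by nlinarith [sq_nonneg (y t), sq_nonneg (z t)]⟩

/-- Uniqueness on a symmetric interval for the Cauchy problem `y'' + q y = 0`, `y 0 = y' 0 = 0`. -/
lemma secondOrder_eq_zero {q y z : ℝ → ℝ} {R : ℝ} (hq : Continuous q)
    (hy : ∀ t ∈ Ioo (-R) R, HasDerivAt y (z t) t)
    (hz : ∀ t ∈ Ioo (-R) R, HasDerivAt z (-(q t) * y t) t)
    (hy0 : y 0 = 0) (hz0 : z 0 = 0) : ∀ t ∈ Ioo (-R) R, y t = 0 ∧ z t = 0 := by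
  intro t ht
  rcases le_total 0 t with h | h
  · exact secondOrder_eq_zero_right (R := R) hq
      (fun s hs => hy s ⟨by linarith [hs.1, hs.2], hs.2⟩)
      (fun s hs => hz s ⟨by linarith [hs.1, hs.2], hs.2⟩) hy0 hz0 t ⟨h, ht.2⟩
  · have := secondOrder_eq_zero_right (q := fun s => q (-s)) (y := fun s => y (-s))
      (z := fun s => -z (-s)) (R := R) (by fun_prop)
      (fun s hs => by
        have := (hy (-s) ⟨by linarith [hs.2], by linarith [hs.1, hs.2]⟩).scomp s (hasDerivAt_neg s)
        simpa [Function.comp_def] using this)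
      (fun s hs => by
        refine ((hz (-s) ⟨by linarith [hs.2], by linarith [hs.1, hs.2]⟩).scomp s
          (hasDerivAt_neg s)).neg.congr_deriv ?_
        simp)
      (by simpa using hy0) (by simpa using hz0) (-t) ⟨by linarith, by linarith [ht.1]⟩
    simpa using this

lemma secondOrder_eq_zero_univ {q y z : ℝ → ℝ} (hq : Continuous q)
    (hy : ∀ t, HasDerivAt y (z t) t) (hz : ∀ t, HasDerivAt z (-(q t) * y t) t)
    (hy0 : y 0 = 0) (hz0 : z 0 = 0) (t : ℝ) : y t = 0 ∧ z t = 0 :=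
  secondOrder_eq_zero (R := |t| + 1) hq (fun s _ => hy s) (fun s _ => hz s) hy0 hz0 t
    ⟨by linarith [neg_abs_le t], by linarith [le_abs_self t]⟩

/-- Existence of the Prüfer angle of `y'' + q y = 0` on a compact interval. -/
lemma exists_pruferAngle {q : ℝ → ℝ} (hq : Continuous q) (R : ℝ) (hR : 0 ≤ R) (θ₀ : ℝ) :
    ∃ θ : ℝ → ℝ, Continuous θ ∧ θ 0 = θ₀ ∧
      ∀ t ∈ Ioo (-R) R, HasDerivAt θ (1 + (q t - 1) * sin (θ t) ^ 2) t := by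
  obtain ⟨B, hB⟩ := isCompact_Icc.exists_bound_of_continuousOn
    (s := Icc (-R) R) (f := fun t => q t - 1) (by fun_prop)
  have h0 : (0 : ℝ) ∈ Icc (-R) R := ⟨by linarith, hR⟩
  have hB0 : 0 ≤ B := (norm_nonneg _).trans (hB 0 h0)
  have hpl : IsPicardLindelof (fun t x => 1 + (q t - 1) * sin x ^ 2) (⟨0, h0⟩ : Icc (-R) R) θ₀
      (⟨(1 + B) * R, by positivity⟩) 0 (⟨1 + B, by positivity⟩) (⟨B * 2, by positivity⟩) := by
    refine ⟨fun t ht => ?_, fun x _ => by fun_prop, fun t ht x _ => ?_, ?_⟩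
    · refine LipschitzOnWith.of_dist_le_mul fun x _ y _ => ?_
      have hs : |sin x - sin y| ≤ |x - y| := by
        simpa [Real.dist_eq] using Real.lipschitzWith_sin.dist_le_mul x y
      have h2 : |sin x + sin y| ≤ 2 := by
        rw [abs_le]; constructor <;>
          linarith [sin_le_one x, sin_le_one y, neg_one_le_sin x, neg_one_le_sin y]
      have hb := hB t ht
      rw [Real.norm_eq_abs] at hb
      rw [Real.dist_eq, Real.dist_eq,
        show 1 + (q t - 1) * sin x ^ 2 - (1 + (q t - 1) * sin y ^ 2)
          = (q t - 1) * (sin x + sin y) * (sin x - sin y) by ring, abs_mul, abs_mul]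
      change _ ≤ B * 2 * |x - y|
      gcongr
    · have hb := hB t ht
      change ‖_‖ ≤ 1 + B
      refine (norm_add_le _ _).trans ?_
      rw [norm_mul, norm_one, norm_pow, Real.norm_eq_abs (sin x), sq_abs]
      have := sin_sq_le_one x
      nlinarith [sq_nonneg (sin x)]
    · change (1 + B) * max (R - 0) (0 - -R) ≤ (1 + B) * R - 0
      simp
  obtain ⟨α, hα0, hα⟩ := hpl.exists_eq_forall_mem_Icc_hasDerivWithinAt₀
  have hcont : ContinuousOn α (Icc (-R) R) := fun t ht => (hα t ht).continuousWithinAt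
  have hext : ∀ t ∈ Icc (-R) R,
      IccExtend (by linarith : -R ≤ R) ((Icc (-R) R).domRestrict α) t = α t :=
    fun t ht => by rw [IccExtend_of_mem _ _ ht]; rfl
  refine ⟨IccExtend (by linarith : -R ≤ R) ((Icc (-R) R).domRestrict α),
    hcont.domRestrict.Icc_extend', (hext 0 h0).trans hα0, fun t ht => ?_⟩
  have ht' := Ioo_subset_Icc_self ht
  rw [hext t ht']
  refine ((hα t ht').hasDerivAt (Icc_mem_nhds ht.1 ht.2)).congr_of_eventuallyEq ?_
  filter_upwards [Icc_mem_nhds ht.1 ht.2] with s hs using hext s hs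

lemma exists_even_solution_Ioo {q : ℝ → ℝ} (hq : Continuous q) (R : ℝ) (hR : 0 ≤ R) :
    ∃ y z : ℝ → ℝ, y 0 = 1 ∧ z 0 = 0 ∧ (∀ t ∈ Ioo (-R) R, HasDerivAt y (z t) t) ∧
      ∀ t ∈ Ioo (-R) R, HasDerivAt z (-(q t) * y t) t := by
  obtain ⟨θ, hθc, hθ0, hθ⟩ := exists_pruferAngle hq R hR (π / 2)
  set g : ℝ → ℝ := fun t => ∫ s in (0 : ℝ)..t, (1 - q s) * (sin (θ s) * cos (θ s)) with hg
  have hint : Continuous fun s => (1 - q s) * (sin (θ s) * cos (θ s)) := by fun_prop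
  have hgd : ∀ t, HasDerivAt g ((1 - q t) * (sin (θ t) * cos (θ t))) t :=
    fun t => (hint.integral_hasStrictDerivAt 0 t).hasDerivAt
  refine ⟨fun t => exp (g t) * sin (θ t), fun t => exp (g t) * cos (θ t), by simp [hg, hθ0],
    by simp [hθ0], fun t ht => ?_, fun t ht => ?_⟩
  · refine ((hgd t).exp.mul (hθ t ht).sin).congr_deriv ?_
    ring
  · refine ((hgd t).exp.mul (hθ t ht).cos).congr_deriv ?_
    linear_combination exp (g t) * sin (θ t) * (1 - q t) * sin_sq_add_cos_sq (θ t)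

/-- The solution of `y'' + q y = 0`, `y 0 = 1`, `y' 0 = 0` exists on the whole line. -/
lemma exists_even_solution {q : ℝ → ℝ} (hq : Continuous q) :
    ∃ y z : ℝ → ℝ, y 0 = 1 ∧ z 0 = 0 ∧ (∀ t, HasDerivAt y (z t) t) ∧
      ∀ t, HasDerivAt z (-(q t) * y t) t := by
  choose Y Z hY0 hZ0 hY hZ using fun n : ℕ => exists_even_solution_Ioo hq n n.cast_nonneg
  have huniq : ∀ {m n : ℕ}, m ≤ n → ∀ t ∈ Ioo (-(m : ℝ)) m, Y m t = Y n t ∧ Z m t = Z n t := by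
    intro m n hmn t ht
    have hc : (m : ℝ) ≤ n := by exact_mod_cast hmn
    have hsub : ∀ s ∈ Ioo (-(m : ℝ)) m, s ∈ Ioo (-(n : ℝ)) n :=
      fun s hs => ⟨by linarith [hs.1], by linarith [hs.2]⟩
    have := secondOrder_eq_zero (y := fun t => Y m t - Y n t) (z := fun t => Z m t - Z n t) hq
      (fun s hs => (hY m s hs).sub (hY n s (hsub s hs)))
      (fun s hs => ((hZ m s hs).sub (hZ n s (hsub s hs))).congr_deriv (by ring))
      (by simp [hY0]) (by simp [hZ0]) t ht
    exact ⟨sub_eq_zero.1 this.1, sub_eq_zero.1 this.2⟩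
  have hN : ∀ t : ℝ, t ∈ Ioo (-((⌊|t|⌋₊ + 1 : ℕ) : ℝ)) (⌊|t|⌋₊ + 1 : ℕ) := fun t => by
    have := Nat.lt_floor_add_one |t|
    push_cast
    exact abs_lt.1 this
  have hYZ : ∀ n : ℕ, ∀ t ∈ Ioo (-(n : ℝ)) n,
      Y (⌊|t|⌋₊ + 1) t = Y n t ∧ Z (⌊|t|⌋₊ + 1) t = Z n t := by
    intro n t ht
    rcases le_total (⌊|t|⌋₊ + 1) n with h | h
    · exact huniq h t (hN t)
    · exact ⟨(huniq h t ht).1.symm, (huniq h t ht).2.symm⟩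
  refine ⟨fun t => Y (⌊|t|⌋₊ + 1) t, fun t => Z (⌊|t|⌋₊ + 1) t, hY0 _, hZ0 _,
    fun t => ?_, fun t => ?_⟩
  · refine (hY _ t (hN t)).congr_of_eventuallyEq ?_
    filter_upwards [Ioo_mem_nhds (hN t).1 (hN t).2] with s hs using (hYZ _ s hs).1
  · refine (hZ _ t (hN t)).congr_of_eventuallyEq ?_
    filter_upwards [Ioo_mem_nhds (hN t).1 (hN t).2] with s hs using (hYZ _ s hs).2

/-- `W` solves the Duffing equation `W'' + lam W + W³ = 0` with `W 0 = ζ`, `W' 0 = 0`,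
where `V` is the derivative of `W`. -/
structure IsDuffing (lam ζ : ℝ) (W V : ℝ → ℝ) : Prop where
  hasDerivAt : ∀ t, HasDerivAt W (V t) t
  hasDerivAt_vel : ∀ t, HasDerivAt V (-(lam * W t) - W t ^ 3) t
  apply_zero : W 0 = ζ
  vel_zero : V 0 = 0

namespace IsDuffing

variable {lam ζ : ℝ} {W V : ℝ → ℝ}

lemma continuous (hW : IsDuffing lam ζ W V) : Continuous W :=
  continuous_iff_continuousAt.2 fun t => (hW.hasDerivAt t).continuousAt

lemma continuous_vel (hW : IsDuffing lam ζ W V) : Continuous V :=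
  continuous_iff_continuousAt.2 fun t => (hW.hasDerivAt_vel t).continuousAt

/-- Conservation of energy. -/
lemma energy (hW : IsDuffing lam ζ W V) (t : ℝ) :
    V t ^ 2 = (ζ ^ 2 - W t ^ 2) * (W t ^ 2 + 2 * lam + ζ ^ 2) / 2 := by
  have hder : ∀ t, HasDerivAt (fun t => V t ^ 2 + lam * W t ^ 2 + W t ^ 4 / 2) 0 t := fun t =>
    ((((hW.hasDerivAt_vel t).pow 2).add (((hW.hasDerivAt t).pow 2).const_mul lam)).add
      (((hW.hasDerivAt t).pow 4).div_const 2)).congr_deriv (by push_cast; ring)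
  have := is_const_of_deriv_eq_zero (fun t => (hder t).differentiableAt)
    (fun t => (hder t).deriv) t 0
  simp only [hW.apply_zero, hW.vel_zero] at this
  linear_combination this

/-- A Duffing solution decreases from its positive maximum to a first zero. -/
lemma exists_first_zero (hW : IsDuffing lam ζ W V) (hlam : 0 < lam) (hζ : 0 < ζ) :
    ∃ h, 0 < h ∧ W h = 0 ∧ (∀ t ∈ Ico 0 h, 0 < W t) ∧ ∀ t ∈ Ioc 0 h, V t < 0 := by
  have hvel : ∀ b, (∀ t ∈ Ico 0 b, 0 < W t) → StrictAntiOn V (Icc 0 b) := by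
    intro b hpos
    refine strictAntiOn_of_deriv_neg (convex_Icc 0 b) hW.continuous_vel.continuousOn
      fun t ht => ?_
    rw [interior_Icc] at ht
    have hp := hpos t ⟨ht.1.le, ht.2⟩
    rw [(hW.hasDerivAt_vel t).deriv]
    have := mul_pos hlam hp
    have := pow_pos hp 3
    linarith
  have hex : ∃ t, 0 ≤ t ∧ W t ≤ 0 := by
    by_contra! hcon
    have hanti : ∀ b, StrictAntiOn V (Icc 0 b) := fun b => hvel b fun t ht => hcon t ht.1
    have hV1 : V 1 < 0 := by
      have := hanti 1 (left_mem_Icc.2 zero_le_one) (right_mem_Icc.2 zero_le_one) one_pos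
      rwa [hW.vel_zero] at this
    have hW1 := hcon 1 zero_le_one
    set b := 1 + W 1 / (-V 1) with hb
    have hdiv : 0 < W 1 / (-V 1) := div_pos hW1 (by linarith)
    have hmvt : W b - W 1 ≤ V 1 * (b - 1) := by
      refine (convex_Icc 1 b).image_sub_le_mul_sub_of_deriv_le hW.continuous.continuousOn
        (fun t _ => (hW.hasDerivAt t).differentiableAt.differentiableWithinAt)
        (fun t ht => ?_) 1 (left_mem_Icc.2 (by linarith)) b (right_mem_Icc.2 (by linarith))
        (by linarith)
      rw [interior_Icc] at ht
      rw [(hW.hasDerivAt t).deriv]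
      exact (hanti t ⟨zero_le_one, ht.1.le⟩ (right_mem_Icc.2 (by linarith [ht.1])) ht.1).le
    have : V 1 * (b - 1) = -W 1 := by
      have := hV1.ne
      rw [hb]
      field_simp
      ring
    have := hcon b (by linarith)
    linarith
  obtain ⟨h, ⟨hh0, hWh⟩, hmin⟩ : ∃ h, IsLeast {t | 0 ≤ t ∧ W t ≤ 0} h :=
    ⟨_, ((isClosed_Ici.inter (isClosed_le hW.continuous continuous_const)).isLeast_csInf
      hex ⟨0, fun t ht => ht.1⟩)⟩
  have hpos : ∀ t ∈ Ico 0 h, 0 < W t := fun t ht => by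
    by_contra hcon
    exact absurd (hmin ⟨ht.1, not_lt.1 hcon⟩) (not_le.2 ht.2)
  have hh : 0 < h := hh0.lt_of_ne fun h0 => by
    rw [← h0, hW.apply_zero] at hWh
    linarith
  refine ⟨h, hh, le_antisymm hWh ?_, hpos, fun t ht => ?_⟩
  · have hmem : h ∈ closure (Ico 0 h) := by
      rw [closure_Ico hh.ne]
      exact right_mem_Icc.2 hh.le
    exact closure_minimal (fun t ht => (hpos t ht).le)
      (isClosed_le continuous_const hW.continuous) hmem
  · have := hvel h hpos (left_mem_Icc.2 hh.le) ⟨ht.1.le, ht.2⟩ ht.1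
    rwa [hW.vel_zero] at this

lemma even (hW : IsDuffing lam ζ W V) (t : ℝ) : W (-t) = W t := by
  have hc := hW.continuous
  have := (secondOrder_eq_zero_univ (y := fun t => W (-t) - W t) (z := fun t => -V (-t) - V t)
    (q := fun t => lam + (W (-t) ^ 2 + W (-t) * W t + W t ^ 2)) (by fun_prop)
    (fun t => (((hW.hasDerivAt (-t)).scomp t (hasDerivAt_neg t)).sub
      (hW.hasDerivAt t)).congr_deriv (by simp))
    (fun t => (((hW.hasDerivAt_vel (-t)).scomp t (hasDerivAt_neg t)).neg.sub
      (hW.hasDerivAt_vel t)).congr_deriv (by simp only [smul_eq_mul]; ring))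
    (by simp) (by simp [hW.vel_zero]) t).1
  linarith

/-- A Duffing solution is antisymmetric about each of its zeros. -/
lemma antisymm_about_zero (hW : IsDuffing lam ζ W V) {h : ℝ} (hh : W h = 0) (t : ℝ) :
    W (h - t) = -W (h + t) := by
  have hc := hW.continuous
  have hs : ∀ t : ℝ, HasDerivAt (fun t => h - t) (-1) t := fun t => by
    simpa using (hasDerivAt_id t).const_sub h
  have ha : ∀ t : ℝ, HasDerivAt (fun t => h + t) 1 t := fun t => by
    simpa using (hasDerivAt_id t).const_add h
  have := (secondOrder_eq_zero_univ (y := fun t => W (h + t) + W (h - t))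
    (z := fun t => V (h + t) - V (h - t))
    (q := fun t => lam + (W (h + t) ^ 2 - W (h + t) * W (h - t) + W (h - t) ^ 2)) (by fun_prop)
    (fun t => (((hW.hasDerivAt (h + t)).scomp t (ha t)).add
      ((hW.hasDerivAt (h - t)).scomp t (hs t))).congr_deriv (by simp only [smul_eq_mul]; ring))
    (fun t => (((hW.hasDerivAt_vel (h + t)).scomp t (ha t)).sub
      ((hW.hasDerivAt_vel (h - t)).scomp t (hs t))).congr_deriv
        (by simp only [smul_eq_mul]; ring))
    (by simp [hh]) (by simp) t).1
  linarith

lemma antiperiodic (hW : IsDuffing lam ζ W V) {h : ℝ} (hh : W h = 0) :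
    Function.Antiperiodic W (2 * h) := fun t => by
  have := hW.antisymm_about_zero hh (h + t)
  rw [show h - (h + t) = -t by ring, show h + (h + t) = t + 2 * h by ring, hW.even] at this
  linarith

variable {ν : ℝ} {C D : ℝ → ℝ}

/-- The quadratic first integral of the Hill equation `C'' + (ν + W²) C = 0` built from
`W² - 2 (ν - lam)`, a product of two of its solutions. -/
lemma hill_invariant (hW : IsDuffing lam ζ W V) (hC : ∀ t, HasDerivAt C (D t) t)
    (hD : ∀ t, HasDerivAt D (-(ν + W t ^ 2) * C t) t) (hC0 : C 0 = 1) (hD0 : D 0 = 0) (t : ℝ) :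
    (W t ^ 2 - 2 * (ν - lam)) * D t ^ 2 - 2 * (W t * V t) * (C t * D t)
      + (lam * ζ ^ 2 + ζ ^ 4 / 2 - 2 * (ν - lam) * ν - ν * W t ^ 2 - W t ^ 4 / 2) * C t ^ 2
      = -((ν - lam) * (ζ ^ 2 + 2 * ν)) := by
  have hder : ∀ t, HasDerivAt (fun t =>
      (W t ^ 2 - 2 * (ν - lam)) * D t ^ 2 - 2 * (W t * V t) * (C t * D t)
      + (lam * ζ ^ 2 + ζ ^ 4 / 2 - 2 * (ν - lam) * ν - ν * W t ^ 2 - W t ^ 4 / 2) * C t ^ 2) 0 t := by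
    intro t
    have dW := hW.hasDerivAt t
    have dV := hW.hasDerivAt_vel t
    refine ((((dW.pow 2).sub_const (2 * (ν - lam))).mul ((hD t).pow 2)).sub
      (((dW.mul dV).const_mul 2).mul ((hC t).mul (hD t))) |>.add
      ((((dW.pow 2).const_mul ν).const_sub (lam * ζ ^ 2 + ζ ^ 4 / 2 - 2 * (ν - lam) * ν) |>.sub
        ((dW.pow 4).div_const 2)).mul ((hC t).pow 2))).congr_deriv ?_
    simp only [Pi.pow_apply, Pi.mul_apply, Pi.sub_apply]
    push_cast
    linear_combination (-2 * C t * D t) * hW.energy t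
  have := is_const_of_deriv_eq_zero (fun t => (hder t).differentiableAt)
    (fun t => (hder t).deriv) t 0
  simp only [hW.apply_zero, hW.vel_zero, hC0, hD0] at this
  linear_combination this

/-- Before the first zero of `W` the even solution of the Hill equation has a zero, by comparison
with `W`. -/
lemma exists_zero_even_solution (hW : IsDuffing lam ζ W V) (hlt : lam < ν)
    (hC : ∀ t, HasDerivAt C (D t) t) (hD : ∀ t, HasDerivAt D (-(ν + W t ^ 2) * C t) t)
    (hC0 : C 0 = 1) (hD0 : D 0 = 0) {h : ℝ} (hh : 0 < h) (hWh : W h = 0)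
    (hpos : ∀ t ∈ Ico 0 h, 0 < W t) (hVh : V h < 0) : ∃ s ∈ Ioo 0 h, C s = 0 := by
  have hCc : Continuous C := continuous_iff_continuousAt.2 fun t => (hC t).continuousAt
  by_contra! hcon
  have hCpos : ∀ t ∈ Ioo 0 h, 0 < C t := by
    intro t ht
    by_contra hneg
    obtain ⟨s, hs, hs0⟩ := intermediate_value_Icc' ht.1.le hCc.continuousOn
      (show (0 : ℝ) ∈ Icc (C t) (C 0) from ⟨not_lt.1 hneg, by rw [hC0]; exact zero_le_one⟩)
    refine hcon s ⟨hs.1.lt_of_ne fun h0 => ?_, hs.2.trans_lt ht.2⟩ hs0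
    rw [← h0, hC0] at hs0
    exact one_ne_zero hs0
  have hder : ∀ t, HasDerivAt (fun t => C t * V t - D t * W t) ((ν - lam) * (C t * W t)) t :=
    fun t => (((hC t).mul (hW.hasDerivAt_vel t)).sub
      ((hD t).mul (hW.hasDerivAt t))).congr_deriv (by ring)
  have hmono : StrictMonoOn (fun t => C t * V t - D t * W t) (Icc 0 h) := by
    refine strictMonoOn_of_deriv_pos (convex_Icc 0 h)
      (fun t _ => (hder t).continuousAt.continuousWithinAt) fun t ht => ?_
    rw [interior_Icc] at ht
    rw [(hder t).deriv]
    exact mul_pos (sub_pos.2 hlt) (mul_pos (hCpos t ht) (hpos t ⟨ht.1.le, ht.2⟩))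
  have hwr := hmono (left_mem_Icc.2 hh.le) (right_mem_Icc.2 hh.le) hh
  simp only [hWh, hW.vel_zero, hD0] at hwr
  have hCh : 0 ≤ C h := by
    have hmem : h ∈ closure (Ioo 0 h) := by
      rw [closure_Ioo hh.ne]
      exact right_mem_Icc.2 hh.le
    exact closure_minimal (fun t ht => (hCpos t ht).le) (isClosed_le continuous_const hCc) hmem
  nlinarith

/-- At the first zero of `W` neither the even solution of the Hill equation nor its derivative
vanishes. The proof is a Picone identity with the solution `√(ζ² - W²)` of
`y'' + (lam + ζ² / 2 + W²) y = 0`. -/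
lemma even_solution_mul_deriv_pos (hW : IsDuffing lam ζ W V) (hν : 0 < ν) (hlt : lam < ν)
    (hζ : 0 < ζ) (hζν : 2 * (ν - lam) < ζ ^ 2)
    (hC : ∀ t, HasDerivAt C (D t) t) (hD : ∀ t, HasDerivAt D (-(ν + W t ^ 2) * C t) t)
    (hC0 : C 0 = 1) (hD0 : D 0 = 0) {h : ℝ} (hh : 0 < h) (hWh : W h = 0)
    (hpos : ∀ t ∈ Ico 0 h, 0 < W t) (hVneg : ∀ t ∈ Ioc 0 h, V t < 0) : 0 < C h * D h := by
  obtain ⟨s, hs, hCs⟩ := hW.exists_zero_even_solution hlt hC hD hC0 hD0 hh hWh hpos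
    (hVneg h ⟨hh, le_rfl⟩)
  have hWanti : StrictAntiOn W (Icc 0 h) := by
    refine strictAntiOn_of_deriv_neg (convex_Icc 0 h) hW.continuous.continuousOn fun t ht => ?_
    rw [interior_Icc] at ht
    rw [(hW.hasDerivAt t).deriv]
    exact hVneg t ⟨ht.1, ht.2.le⟩
  have hgap : ∀ t ∈ Icc s h, 0 < ζ ^ 2 - W t ^ 2 := by
    intro t ht
    have h1 := hWanti (left_mem_Icc.2 hh.le) ⟨hs.1.le.trans ht.1, ht.2⟩ (hs.1.trans_le ht.1)
    have h2 := hWanti.antitoneOn ⟨hs.1.le.trans ht.1, ht.2⟩ (right_mem_Icc.2 hh.le) ht.2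
    rw [hW.apply_zero] at h1
    rw [hWh] at h2
    nlinarith
  have hder : ∀ t ∈ Icc s h, HasDerivAt
      (fun t => C t * D t + C t ^ 2 * (W t * V t / (ζ ^ 2 - W t ^ 2)))
      ((D t + C t * (W t * V t / (ζ ^ 2 - W t ^ 2))) ^ 2
        + (lam + ζ ^ 2 / 2 - ν) * C t ^ 2) t := by
    intro t ht
    have hne := (hgap t ht).ne'
    have dW := hW.hasDerivAt t
    refine (((hC t).mul (hD t)).add (((hC t).pow 2).mul ((dW.mul (hW.hasDerivAt_vel t)).div
      ((dW.pow 2).const_sub (ζ ^ 2)) hne))).congr_deriv ?_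
    simp only [Pi.pow_apply, Pi.mul_apply, Pi.div_apply]
    push_cast
    have he := hW.energy t
    field_simp
    linear_combination (2 * C t ^ 2 * ζ ^ 2) * he
  have hmono : StrictMonoOn (fun t => C t * D t + C t ^ 2 * (W t * V t / (ζ ^ 2 - W t ^ 2)))
      (Icc s h) := by
    refine strictMonoOn_of_deriv_pos (convex_Icc s h)
      (fun t ht => (hder t ht).continuousAt.continuousWithinAt) fun t ht => ?_
    rw [(hder t (interior_subset ht)).deriv]
    have hinv := hW.hill_invariant hC hD hC0 hD0 t
    have hP : 0 < (ν - lam) * (ζ ^ 2 + 2 * ν) := by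
      have := sub_pos.2 hlt
      positivity
    rcases eq_or_ne (C t) 0 with hCt | hCt
    · have hDt : D t ≠ 0 := fun hDt => by
        rw [hCt, hDt] at hinv
        norm_num at hinv
        rcases hinv with h0 | h0 <;> nlinarith
      rw [hCt]
      have : 0 < D t ^ 2 := by positivity
      simpa using this
    · have : 0 < C t ^ 2 := by positivity
      have h2 : 0 < lam + ζ ^ 2 / 2 - ν := by linarith
      positivity
  have := hmono (left_mem_Icc.2 hs.2.le) (right_mem_Icc.2 hs.2.le) hs.2
  simpa [hCs, hWh] using this

end IsDuffing

lemma hill_eq_smul {q C D y z : ℝ → ℝ} (hq : Continuous q)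
    (hC : ∀ t, HasDerivAt C (D t) t) (hD : ∀ t, HasDerivAt D (-(q t) * C t) t)
    (hC0 : C 0 = 1) (hD0 : D 0 = 0)
    (hy : ∀ t, HasDerivAt y (z t) t) (hz : ∀ t, HasDerivAt z (-(q t) * y t) t)
    (hz0 : z 0 = 0) (t : ℝ) : y t = y 0 * C t ∧ z t = y 0 * D t := by
  have := secondOrder_eq_zero_univ (y := fun t => y t - y 0 * C t)
    (z := fun t => z t - y 0 * D t) hq
    (fun t => (hy t).sub ((hC t).const_mul (y 0)))
    (fun t => ((hz t).sub ((hD t).const_mul (y 0))).congr_deriv (by ring))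
    (by simp [hC0]) (by simp [hz0, hD0]) t
  exact ⟨sub_eq_zero.1 this.1, sub_eq_zero.1 this.2⟩

lemma even_solution_even {q C D : ℝ → ℝ} (hq : Continuous q) (hqe : ∀ t, q (-t) = q t)
    (hC : ∀ t, HasDerivAt C (D t) t) (hD : ∀ t, HasDerivAt D (-(q t) * C t) t)
    (hC0 : C 0 = 1) (hD0 : D 0 = 0) (t : ℝ) : C (-t) = C t ∧ -D (-t) = D t := by
  have := hill_eq_smul (y := fun t => C (-t)) (z := fun t => -D (-t)) hq hC hD hC0 hD0
    (fun t => ((hC (-t)).scomp t (hasDerivAt_neg t)).congr_deriv (by simp))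
    (fun t => (((hD (-t)).scomp t (hasDerivAt_neg t)).neg).congr_deriv (by simp [hqe]))
    (by simp [hD0]) t
  simpa [hC0] using this

/-- Floquet recurrence for the even solution of a Hill equation with even `T`-periodic
coefficient. -/
lemma even_solution_add_period {q C D : ℝ → ℝ} {T : ℝ} (hq : Continuous q)
    (hqe : ∀ t, q (-t) = q t) (hqT : Function.Periodic q T)
    (hC : ∀ t, HasDerivAt C (D t) t) (hD : ∀ t, HasDerivAt D (-(q t) * C t) t)
    (hC0 : C 0 = 1) (hD0 : D 0 = 0) (t : ℝ) : C (t + T) + C (t - T) = 2 * C T * C t := by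
  have he := even_solution_even hq hqe hC hD hC0 hD0 T
  have := (hill_eq_smul (y := fun t => C (t + T) + C (t - T)) (z := fun t => D (t + T) + D (t - T))
    hq hC hD hC0 hD0
    (fun t => ((hC (t + T)).comp_add_const t T).add ((hC (t - T)).comp_sub_const t T))
    (fun t => (((hD (t + T)).comp_add_const t T).add
      ((hD (t - T)).comp_sub_const t T)).congr_deriv (by rw [hqT, hqT.sub_eq]; ring))
    (by simp only [zero_add, zero_sub]; linarith [he.2]) t).1
  simp only [zero_add, zero_sub, he.1] at this
  linarith

lemma pow_le_abs_of_recurrence {u : ℕ → ℝ} {c : ℝ} (hc : 1 ≤ |c|) (h0 : u 0 = 1) (h1 : u 1 = c)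
    (hu : ∀ n, u (n + 2) = 2 * c * u (n + 1) - u n) (n : ℕ) : |c| ^ n ≤ |u n| := by
  have hstep : ∀ n, |c| * |u n| ≤ |u (n + 1)| := by
    intro n
    induction n with
    | zero => simp [h0, h1]
    | succ n ih =>
      have hle : |u n| ≤ |u (n + 1)| := by nlinarith [abs_nonneg (u n)]
      have : |2 * c * u (n + 1)| - |u n| ≤ |u (n + 2)| := by
        rw [hu n]
        exact abs_sub_abs_le_abs_sub _ _
      rw [abs_mul, abs_mul, abs_two] at this
      nlinarith [abs_nonneg (u (n + 1))]
  induction n with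
  | zero => simp [h0]
  | succ n ih =>
    calc |c| ^ (n + 1) = |c| * |c| ^ n := by ring
      _ ≤ |c| * |u n| := by gcongr
      _ ≤ |u (n + 1)| := hstep n

/-- Over one period of `W²` the even solution of the Hill equation grows in absolute value. -/
lemma IsDuffing.one_lt_abs_even_solution {lam ν ζ : ℝ} {W V C D : ℝ → ℝ}
    (hW : IsDuffing lam ζ W V) (hν : 0 < ν) (hlt : lam < ν)
    (hζ : 0 < ζ) (hζν : 2 * (ν - lam) < ζ ^ 2)
    (hC : ∀ t, HasDerivAt C (D t) t) (hD : ∀ t, HasDerivAt D (-(ν + W t ^ 2) * C t) t)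
    (hC0 : C 0 = 1) (hD0 : D 0 = 0) {h : ℝ} (hh : 0 < h) (hWh : W h = 0)
    (hpos : ∀ t ∈ Ico 0 h, 0 < W t) (hVneg : ∀ t ∈ Ioc 0 h, V t < 0) : 1 < |C (2 * h)| := by
  have hc := hW.continuous
  have hCD := hW.even_solution_mul_deriv_pos hν hlt hζ hζν hC hD hC0 hD0 hh hWh hpos hVneg
  have hWT : W (2 * h) = -ζ := by
    have := hW.antiperiodic hWh 0
    rwa [zero_add, hW.apply_zero] at this
  have hVT : V (2 * h) = 0 := by
    have := hW.energy (2 * h)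
    rw [hWT] at this
    have h2 : V (2 * h) ^ 2 = 0 := by rw [this]; ring
    exact pow_eq_zero_iff two_ne_zero |>.1 h2
  have hDT : D (2 * h) ≠ 0 := by
    intro hDT
    have hs : ∀ t : ℝ, HasDerivAt (fun t => 2 * h - t) (-1) t := fun t => by
      simpa using (hasDerivAt_id t).const_sub (2 * h)
    have hrefl := hill_eq_smul (q := fun t => ν + W t ^ 2) (y := fun t => C (2 * h - t))
      (z := fun t => -D (2 * h - t)) (by fun_prop) hC hD hC0 hD0
      (fun t => ((hC (2 * h - t)).scomp t (hs t)).congr_deriv (by simp))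
      (fun t => ((hD (2 * h - t)).scomp t (hs t)).neg.congr_deriv (by
        have : W (2 * h - t) = -W t := by
          rw [show 2 * h - t = -t + 2 * h by ring, hW.antiperiodic hWh, hW.even]
        simp [this])) (by simp [hDT]) h
    simp only [sub_zero, show 2 * h - h = h by ring] at hrefl
    have hCh : C h ≠ 0 := left_ne_zero_of_mul hCD.ne'
    have hCT : C (2 * h) = 1 := mul_right_cancel₀ hCh (by rw [← hrefl.1, one_mul])
    have := hrefl.2
    rw [hCT] at this
    exact right_ne_zero_of_mul hCD.ne' (by linarith)
  have hinv := hW.hill_invariant hC hD hC0 hD0 (2 * h)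
  rw [hWT, hVT] at hinv
  have hP : 0 < (ν - lam) * (ζ ^ 2 + 2 * ν) := by
    have := sub_pos.2 hlt
    positivity
  have hF : 0 < (ζ ^ 2 - 2 * (ν - lam)) * D (2 * h) ^ 2 :=
    mul_pos (by linarith) (by positivity)
  rw [← one_lt_sq_iff_one_lt_abs]
  by_contra! hle
  nlinarith [mul_le_mul_of_nonneg_left hle hP.le]

/-- Linear instability of the λ-nonlinear mode with respect to the
ν-nonlinear mode: if `W` solves the Duffing problem `W'' + λW + W³ = 0`,
`W(0) = ζ`, `W'(0) = 0`, with `λ < ν` and `ζ > √(2(ν - λ))`, then the Hill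
equation `ξ'' + (ν + W²)ξ = 0` has a solution unbounded on `[0, ∞)`. -/
theorem stmt6 (lam ν ζ : ℝ) (hlam : 0 < lam) (hν : 0 < ν) (hlt : lam < ν)
    (hζ : Real.sqrt (2 * (ν - lam)) < ζ)
    (W : ℝ → ℝ) (hW1 : Differentiable ℝ W) (hW2 : Differentiable ℝ (deriv W))
    (hode : ∀ t, deriv (deriv W) t + lam * W t + W t ^ 3 = 0)
    (hW0 : W 0 = ζ) (hW0' : deriv W 0 = 0) :
    ∃ ξ : ℝ → ℝ, Differentiable ℝ ξ ∧ Differentiable ℝ (deriv ξ) ∧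
      (∀ t, 0 ≤ t → deriv (deriv ξ) t + (ν + W t ^ 2) * ξ t = 0) ∧
      ∀ M : ℝ, ∃ t, 0 ≤ t ∧ M < |ξ t| := by
  have hW : IsDuffing lam ζ W (deriv W) := ⟨fun t => (hW1 t).hasDerivAt,
    fun t => (hW2 t).hasDerivAt.congr_deriv (by linarith [hode t]), hW0, hW0'⟩
  have hζ0 : 0 < ζ := (sqrt_nonneg _).trans_lt hζ
  have hζν : 2 * (ν - lam) < ζ ^ 2 := (sqrt_lt' hζ0).1 hζ
  obtain ⟨h, hh, hWh, hpos, hVneg⟩ := hW.exists_first_zero hlam hζ0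
  have hq : Continuous fun t => ν + W t ^ 2 := by
    have := hW.continuous
    fun_prop
  obtain ⟨C, D, hC0, hD0, hC, hD⟩ := exists_even_solution hq
  have hderiv : deriv C = D := funext fun t => (hC t).deriv
  refine ⟨C, fun t => (hC t).differentiableAt, ?_, fun t _ => ?_, fun M => ?_⟩
  · rw [hderiv]
    exact fun t => (hD t).differentiableAt
  · rw [hderiv, (hD t).deriv]
    ring
  · have hc := hW.one_lt_abs_even_solution hν hlt hζ0 hζν hC hD hC0 hD0 hh hWh hpos hVneg
    have hgrow := pow_le_abs_of_recurrence (u := fun n : ℕ => C (n * (2 * h))) (c := C (2 * h))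
      hc.le (by simp [hC0]) (by simp) (fun n => by
        have := even_solution_add_period (T := 2 * h) hq (fun t => by simp only [hW.even])
          (fun t => by simp only [hW.antiperiodic hWh t, neg_sq]) hC hD hC0 hD0
          ((n + 1 : ℕ) * (2 * h))
        push_cast at this ⊢
        rw [show ((n : ℝ) + 1) * (2 * h) + 2 * h = (n + 2) * (2 * h) by ring,
          show ((n : ℝ) + 1) * (2 * h) - 2 * h = n * (2 * h) by ring] at this
        linarith)
    obtain ⟨n, hn⟩ := pow_unbounded_of_one_lt M hc
    exact ⟨n * (2 * h), by positivity, hn.trans_le (hgrow n)⟩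
end

section
/- Let n ∈ ℕ, let λ : Fin n → ℝ, and let c : ℝ → (Fin n → ℝ) be such that each component c_j is twice differentiable and satisfies, for all t ∈ ℝ and all j, c_j''(t) + λ_j c_j(t) + (Σ_{k} c_k(t)²) c_j(t) = 0. Then the energy E(t) := (1/2) Σ_j c_j'(t)² + (1/2) Σ_j λ_j c_j(t)² + (1/4) (Σ_j c_j(t)²)² is constant in t. -/
open Real MeasureTheory Set Filter

/-- Conservation of energy for the Galerkin system
`c_j'' + λ_j c_j + (Σ_k c_k²) c_j = 0`: the total energy
`(1/2) Σ_j (c_j')² + (1/2) Σ_j λ_j c_j² + (1/4)(Σ_j c_j²)²` is constant. -/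
theorem stmt10 (n : ℕ) (lam : Fin n → ℝ) (c c' c'' : ℝ → Fin n → ℝ)
    (hc : ∀ j, ∀ t : ℝ, HasDerivAt (fun s => c s j) (c' t j) t)
    (hc' : ∀ j, ∀ t : ℝ, HasDerivAt (fun s => c' s j) (c'' t j) t)
    (hode : ∀ t : ℝ, ∀ j, c'' t j + lam j * c t j + (∑ k, (c t k) ^ 2) * c t j = 0) :
    ∀ t s : ℝ,
      (1/2) * (∑ j, (c' t j) ^ 2) + (1/2) * (∑ j, lam j * (c t j) ^ 2)
        + (1/4) * (∑ j, (c t j) ^ 2) ^ 2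
      = (1/2) * (∑ j, (c' s j) ^ 2) + (1/2) * (∑ j, lam j * (c s j) ^ 2)
        + (1/4) * (∑ j, (c s j) ^ 2) ^ 2 := by
  have hsq (f f' : ℝ → Fin n → ℝ) (t : ℝ) (j : Fin n)
      (hf : HasDerivAt (fun s => f s j) (f' t j) t) :
      HasDerivAt (fun s => f s j ^ 2) (2 * f t j * f' t j) t := by
    simpa using hf.fun_pow 2
  have hE (t : ℝ) : HasDerivAt (fun t => (1/2) * (∑ j, (c' t j) ^ 2)
      + (1/2) * (∑ j, lam j * (c t j) ^ 2) + (1/4) * (∑ j, (c t j) ^ 2) ^ 2) 0 t := by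
    have hkin := HasDerivAt.fun_sum (u := Finset.univ) fun j _ => hsq c' c'' t j (hc' j t)
    have hbend := HasDerivAt.fun_sum (u := Finset.univ)
      fun j _ => (hsq c c' t j (hc j t)).const_mul (lam j)
    have hmass := HasDerivAt.fun_sum (u := Finset.univ) fun j _ => hsq c c' t j (hc j t)
    refine (((hkin.const_mul (1/2)).add (hbend.const_mul (1/2))).add
      ((hmass.fun_pow 2).const_mul (1/4))).congr_deriv ?_
    have hsum : ∑ j, c' t j * (c'' t j + lam j * c t j + (∑ k, (c t k) ^ 2) * c t j) = 0 :=
      Finset.sum_eq_zero fun j _ => by rw [hode t j, mul_zero]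
    rw [← hsum]
    generalize ∑ k, (c t k) ^ 2 = S
    simp only [Finset.mul_sum, ← Finset.sum_add_distrib]
    refine Finset.sum_congr rfl fun j _ => ?_
    norm_num
    ring
  exact is_const_of_deriv_eq_zero (fun t => (hE t).differentiableAt) fun t => (hE t).deriv
end

section
/- Let n ∈ ℕ, let λ : Fin n → ℝ with λ_j > 0 for all j, and let g, h : Fin n → ℝ. Then there exists c : ℝ → (Fin n → ℝ), with every component twice continuously differentiable on [0, ∞), such that c_j''(t) + λ_j c_j(t) + (Σ_{k} c_k(t)²) c_j(t) = 0 for all t ≥ 0 and all j, with c_j(0) = g_j and c_j'(0) = h_j for every j. Moreover every such solution is bounded on [0, ∞), with (1/2) Σ_j c_j'(t)² + (1/2) Σ_j λ_j c_j(t)² + (1/4)(Σ_j c_j(t)²)² = (1/2) Σ_j h_j² + (1/2) Σ_j λ_j g_j² + (1/4)(Σ_j g_j²)² for all t ≥ 0. -/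
open Real MeasureTheory Set Filter

open scoped NNReal

/-- A bounded, globally Lipschitz autonomous vector field has a forward-global integral curve
through every point. -/
theorem exists_forall_hasDerivWithinAt_Ici_of_lipschitzWith {E : Type*} [NormedAddCommGroup E]
    [NormedSpace ℝ E] [CompleteSpace E] {v : E → E} {K : ℝ≥0} {C : ℝ}
    (hv : LipschitzWith K v) (hC : ∀ x, ‖v x‖ ≤ C) (x₀ : E) :
    ∃ x : ℝ → E, x 0 = x₀ ∧ ∀ t ∈ Ici (0 : ℝ), HasDerivWithinAt x (v (x t)) (Ici 0) t := by
  have hC' : 0 ≤ C := (norm_nonneg _).trans (hC x₀)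
  lift C to ℝ≥0 using hC'
  have hloc : ∀ N : ℕ, ∃ α : ℝ → E, α 0 = x₀ ∧
      ∀ t ∈ Icc (0 : ℝ) N, HasDerivWithinAt α (v (α t)) (Icc 0 (N : ℝ)) t := by
    intro N
    have hPL : IsPicardLindelof (fun _ ↦ v) (⟨0, le_rfl, N.cast_nonneg⟩ : Icc (0 : ℝ) N) x₀
        (C * N) 0 C K :=
      .of_time_independent (fun x _ ↦ hC x) hv.lipschitzOnWith (by simp)
    exact hPL.exists_eq_forall_mem_Icc_hasDerivWithinAt₀
  choose α hα₀ hα using hloc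
  have hcont (N : ℕ) : ContinuousOn (α N) (Icc 0 (N : ℝ)) :=
    fun t ht ↦ (hα N t ht).continuousWithinAt
  have hright (N : ℕ) (t : ℝ) (ht : t ∈ Ico (0 : ℝ) N) :
      HasDerivWithinAt (α N) (v (α N t)) (Ici t) t :=
    (hα N t ⟨ht.1, ht.2.le⟩).mono_of_mem_nhdsWithin <|
      mem_of_superset (Icc_mem_nhdsGE ht.2) (Icc_subset_Icc_left ht.1)
  have hagree {M N : ℕ} (hMN : M ≤ N) : EqOn (α M) (α N) (Icc 0 (M : ℝ)) := by
    have hMN' : (M : ℝ) ≤ N := by exact_mod_cast hMN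
    exact ODE_solution_unique (v := fun _ ↦ v) (fun _ ↦ hv) (hcont M) (hright M)
      ((hcont N).mono (Icc_subset_Icc_right hMN'))
      (fun t ht ↦ hright N t ⟨ht.1, ht.2.trans_le hMN'⟩) ((hα₀ M).trans (hα₀ N).symm)
  have hglue (N : ℕ) : EqOn (fun t ↦ α (⌊t⌋₊ + 1) t) (α N) (Icc 0 (N : ℝ)) := by
    intro s hs
    have hs' : s ∈ Icc (0 : ℝ) ((⌊s⌋₊ + 1 : ℕ) : ℝ) :=
      ⟨hs.1, by exact_mod_cast (Nat.lt_floor_add_one s).le⟩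
    rcases le_total (⌊s⌋₊ + 1) N with h | h
    · exact hagree h hs'
    · exact (hagree h hs).symm
  refine ⟨fun t ↦ α (⌊t⌋₊ + 1) t, hα₀ _, fun t ht ↦ ?_⟩
  have ht₀ : 0 ≤ t := ht
  have hlt : t < ((⌊t⌋₊ + 1 : ℕ) : ℝ) := by exact_mod_cast Nat.lt_floor_add_one t
  have hmem : t ∈ Icc (0 : ℝ) ((⌊t⌋₊ + 1 : ℕ) : ℝ) := ⟨ht₀, hlt.le⟩
  refine ((hα _ t hmem).congr (hglue _) (hglue _ hmem)).mono_of_mem_nhdsWithin ?_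
  rw [← Ici_inter_Iic]
  exact inter_mem self_mem_nhdsWithin (mem_nhdsWithin_of_mem_nhds (Iic_mem_nhds hlt))

/-- The energy of the Galerkin system at position `c` and velocity `d`. -/
noncomputable def galerkinEnergy {n : ℕ} (lam c d : Fin n → ℝ) : ℝ :=
  (1/2) * (∑ j, (d j) ^ 2) + (1/2) * (∑ j, lam j * (c j) ^ 2) + (1/4) * (∑ j, (c j) ^ 2) ^ 2

/-- The energy is constant along every time reparametrization of the Galerkin flow. -/
theorem galerkinEnergy_eq_of_hasDerivWithinAt {n : ℕ} {lam : Fin n → ℝ} {c d : ℝ → Fin n → ℝ}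
    {k : ℝ → ℝ}
    (hc : ∀ j, ∀ t ∈ Ici (0 : ℝ),
      HasDerivWithinAt (fun s ↦ c s j) (k t * d t j) (Ici 0) t)
    (hd : ∀ j, ∀ t ∈ Ici (0 : ℝ), HasDerivWithinAt (fun s ↦ d s j)
      (k t * -(lam j * c t j + (∑ i, (c t i) ^ 2) * c t j)) (Ici 0) t)
    {t : ℝ} (ht : 0 ≤ t) :
    galerkinEnergy lam (c t) (d t) = galerkinEnergy lam (c 0) (d 0) := by
  have hderiv : ∀ s ∈ Ici (0 : ℝ),
      HasDerivWithinAt (fun s ↦ galerkinEnergy lam (c s) (d s)) 0 (Ici 0) s := by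
    intro s hs
    have hd2 := HasDerivWithinAt.fun_sum (u := Finset.univ) fun j _ ↦ (hd j s hs).fun_pow 2
    have hlc2 := HasDerivWithinAt.fun_sum (u := Finset.univ) fun j _ ↦
      ((hc j s hs).fun_pow 2).const_mul (lam j)
    have hc2 := HasDerivWithinAt.fun_sum (u := Finset.univ) fun j _ ↦ (hc j s hs).fun_pow 2
    refine (((hd2.const_mul (1/2)).add (hlc2.const_mul (1/2))).add
      ((hc2.fun_pow 2).const_mul (1/4))).congr_deriv ?_
    set S := ∑ i, (c s i) ^ 2
    simp only [Finset.mul_sum, ← Finset.sum_add_distrib]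
    refine Finset.sum_eq_zero fun j _ ↦ ?_
    push_cast
    ring
  exact constant_of_has_deriv_right_zero
    (fun s hs ↦ (hderiv s hs.1).continuousWithinAt.mono Icc_subset_Ici_self)
    (fun s hs ↦ (hderiv s hs.1).mono (Ici_subset_Ici.2 hs.1)) t ⟨ht, le_rfl⟩

theorem galerkinEnergy_nonneg {n : ℕ} {lam : Fin n → ℝ} (hlam : ∀ j, 0 ≤ lam j)
    (c d : Fin n → ℝ) : 0 ≤ galerkinEnergy lam c d := by
  have : 0 ≤ ∑ j, lam j * (c j) ^ 2 :=
    Finset.sum_nonneg fun j _ ↦ mul_nonneg (hlam j) (sq_nonneg _)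
  unfold galerkinEnergy
  positivity

/-- Sublevel sets of the energy are bounded in phase space. -/
theorem norm_le_of_galerkinEnergy {n : ℕ} {lam : Fin n → ℝ} (hlam : ∀ j, 0 ≤ lam j)
    (c d : Fin n → ℝ) : ‖(c, d)‖ ≤ 4 * galerkinEnergy lam c d + 2 := by
  have hE := galerkinEnergy_nonneg hlam c d
  have hl : 0 ≤ ∑ j, lam j * (c j) ^ 2 :=
    Finset.sum_nonneg fun j _ ↦ mul_nonneg (hlam j) (sq_nonneg _)
  have hS : 0 ≤ ∑ j, (c j) ^ 2 := Finset.sum_nonneg fun j _ ↦ sq_nonneg _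
  have hD : 0 ≤ ∑ j, (d j) ^ 2 := Finset.sum_nonneg fun j _ ↦ sq_nonneg _
  have hle (x : Fin n → ℝ) (j : Fin n) : (x j) ^ 2 ≤ ∑ i, (x i) ^ 2 :=
    Finset.single_le_sum (f := fun i ↦ (x i) ^ 2) (fun i _ ↦ sq_nonneg _) (Finset.mem_univ j)
  have hdef : galerkinEnergy lam c d = (1/2) * (∑ j, (d j) ^ 2) +
    (1/2) * (∑ j, lam j * (c j) ^ 2) + (1/4) * (∑ j, (c j) ^ 2) ^ 2 := rfl
  rw [norm_prod_le_iff, pi_norm_le_iff_of_nonneg (by positivity),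
    pi_norm_le_iff_of_nonneg (by positivity)]
  refine ⟨fun j ↦ ?_, fun j ↦ ?_⟩
  · have := hle c j
    rw [Real.norm_eq_abs, abs_le]
    constructor <;>
      nlinarith [sq_nonneg (∑ j, (c j) ^ 2 - 1), sq_nonneg (c j - 1), sq_nonneg (c j + 1)]
  · have := hle d j
    rw [Real.norm_eq_abs, abs_le]
    constructor <;>
      nlinarith [sq_nonneg (∑ j, (c j) ^ 2), sq_nonneg (d j - 1), sq_nonneg (d j + 1)]

/-- The phase-space vector field of the Galerkin system. -/
def galerkinField {n : ℕ} (lam : Fin n → ℝ) (x : (Fin n → ℝ) × (Fin n → ℝ)) :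
    (Fin n → ℝ) × (Fin n → ℝ) :=
  (x.2, fun j ↦ -(lam j * x.1 j + (∑ i, (x.1 i) ^ 2) * x.1 j))

theorem contDiff_galerkinField {n : ℕ} (lam : Fin n → ℝ) :
    ContDiff ℝ 1 (galerkinField lam) := by
  unfold galerkinField
  fun_prop

/-- The Galerkin system has a forward-global solution for all initial data. -/
theorem exists_forall_hasDerivWithinAt_galerkinField {n : ℕ} {lam : Fin n → ℝ}
    (hlam : ∀ j, 0 ≤ lam j) (g h : Fin n → ℝ) :
    ∃ x : ℝ → (Fin n → ℝ) × (Fin n → ℝ), x 0 = (g, h) ∧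
      ∀ t ∈ Ici (0 : ℝ), HasDerivWithinAt x (galerkinField lam (x t)) (Ici 0) t := by
  have hR : 0 < 4 * galerkinEnergy lam g h + 2 := by
    linarith [galerkinEnergy_nonneg hlam g h]
  let χ : ContDiffBump (0 : (Fin n → ℝ) × (Fin n → ℝ)) := ⟨_, _, hR, lt_add_one _⟩
  -- The cut-off only reparametrizes time, so it preserves the energy.
  have hsmooth : ContDiff ℝ 1 fun x ↦ χ x • galerkinField lam x :=
    χ.contDiff.smul (contDiff_galerkinField lam)
  have hsupp : HasCompactSupport fun x ↦ χ x • galerkinField lam x :=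
    χ.hasCompactSupport.smul_right
  obtain ⟨K, hK⟩ := hsmooth.lipschitzWith_of_hasCompactSupport hsupp one_ne_zero
  obtain ⟨C, hC⟩ := hsupp.exists_bound_of_continuous hsmooth.continuous
  obtain ⟨x, hx₀, hx⟩ := exists_forall_hasDerivWithinAt_Ici_of_lipschitzWith hK hC (g, h)
  refine ⟨x, hx₀, fun t ht ↦ ?_⟩
  have henergy : galerkinEnergy lam (x t).1 (x t).2 = galerkinEnergy lam g h := by
    have := galerkinEnergy_eq_of_hasDerivWithinAt (lam := lam) (c := fun s ↦ (x s).1)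
      (d := fun s ↦ (x s).2) (k := fun s ↦ χ (x s))
      (fun j s hs ↦ hasDerivWithinAt_pi.1 (hx s hs).fst j)
      (fun j s hs ↦ hasDerivWithinAt_pi.1 (hx s hs).snd j) ht
    simpa only [hx₀] using this
  have hχ : χ (x t) = 1 := by
    refine χ.one_of_mem_closedBall ?_
    rw [mem_closedBall_zero_iff]
    have hnorm := norm_le_of_galerkinEnergy hlam (x t).1 (x t).2
    rwa [henergy] at hnorm
  simpa only [hχ, one_smul] using hx t ht

/-- Global existence and boundedness for the Galerkin system
`c_j'' + λ_j c_j + (Σ_k c_k²) c_j = 0` with initial data `c(0) = g`,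
`c'(0) = h`: a solution exists on `[0, ∞)`, and every solution is bounded,
with conserved energy. -/
theorem stmt11 (n : ℕ) (lam : Fin n → ℝ) (hlam : ∀ j, 0 < lam j)
    (g h : Fin n → ℝ) :
    (∃ c c' c'' : ℝ → Fin n → ℝ,
      (∀ j, ∀ t ∈ Set.Ici (0 : ℝ),
        HasDerivWithinAt (fun s => c s j) (c' t j) (Set.Ici 0) t) ∧
      (∀ j, ∀ t ∈ Set.Ici (0 : ℝ),
        HasDerivWithinAt (fun s => c' s j) (c'' t j) (Set.Ici 0) t) ∧
      (∀ j, ContinuousOn (fun t => c'' t j) (Set.Ici 0)) ∧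
      (∀ t : ℝ, 0 ≤ t → ∀ j,
        c'' t j + lam j * c t j + (∑ k, (c t k) ^ 2) * c t j = 0) ∧
      (∀ j, c 0 j = g j) ∧ (∀ j, c' 0 j = h j)) ∧
    (∀ c c' c'' : ℝ → Fin n → ℝ,
      (∀ j, ∀ t ∈ Set.Ici (0 : ℝ),
        HasDerivWithinAt (fun s => c s j) (c' t j) (Set.Ici 0) t) →
      (∀ j, ∀ t ∈ Set.Ici (0 : ℝ),
        HasDerivWithinAt (fun s => c' s j) (c'' t j) (Set.Ici 0) t) →
      (∀ j, ContinuousOn (fun t => c'' t j) (Set.Ici 0)) →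
      (∀ t : ℝ, 0 ≤ t → ∀ j,
        c'' t j + lam j * c t j + (∑ k, (c t k) ^ 2) * c t j = 0) →
      (∀ j, c 0 j = g j) → (∀ j, c' 0 j = h j) →
      (∃ M : ℝ, ∀ t : ℝ, 0 ≤ t → ∀ j, |c t j| ≤ M) ∧
      ∀ t : ℝ, 0 ≤ t →
        (1/2) * (∑ j, (c' t j) ^ 2) + (1/2) * (∑ j, lam j * (c t j) ^ 2)
          + (1/4) * (∑ j, (c t j) ^ 2) ^ 2
        = (1/2) * (∑ j, (h j) ^ 2) + (1/2) * (∑ j, lam j * (g j) ^ 2)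
          + (1/4) * (∑ j, (g j) ^ 2) ^ 2) := by
  refine ⟨?_, fun c c' c'' hc hc' _ hode hc₀ hc'₀ ↦ ?_⟩
  · obtain ⟨x, hx₀, hx⟩ := exists_forall_hasDerivWithinAt_galerkinField (fun j ↦ (hlam j).le) g h
    have hcont : ContinuousOn x (Ici 0) := fun t ht ↦ (hx t ht).continuousWithinAt
    refine ⟨fun t ↦ (x t).1, fun t ↦ (x t).2, fun t ↦ (galerkinField lam (x t)).2,
      fun j t ht ↦ hasDerivWithinAt_pi.1 (hx t ht).fst j,
      fun j t ht ↦ hasDerivWithinAt_pi.1 (hx t ht).snd j, fun j ↦ ?_, fun t _ j ↦ ?_,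
      fun j ↦ by simp only [hx₀], fun j ↦ by simp only [hx₀]⟩
    · exact ((continuous_apply j).comp
        (continuous_snd.comp (contDiff_galerkinField lam).continuous)).comp_continuousOn hcont
    · simp only [galerkinField]
      ring
  · have henergy (t : ℝ) (ht : 0 ≤ t) :
        galerkinEnergy lam (c t) (c' t) = galerkinEnergy lam g h := by
      rw [← funext hc₀, ← funext hc'₀]
      refine galerkinEnergy_eq_of_hasDerivWithinAt (k := fun _ ↦ 1)
        (fun j s hs ↦ (hc j s hs).congr_deriv (one_mul _).symm)
        (fun j s hs ↦ (hc' j s hs).congr_deriv ?_) ht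
      linarith [hode s hs j]
    refine ⟨⟨4 * galerkinEnergy lam g h + 2, fun t ht j ↦ ?_⟩, henergy⟩
    rw [← henergy t ht]
    exact (norm_le_pi_norm (c t) j).trans
      ((norm_fst_le (c t, c' t)).trans (norm_le_of_galerkinEnergy (fun j ↦ (hlam j).le) _ _))
end

section
/- Let λ > 0 and ζ > 0, and let W : ℝ → ℝ be twice differentiable with W''(t) + λ W(t) + W(t)³ = 0 for all t, W(0) = ζ and W'(0) = 0. Set b = √(λ + ζ²), γ = ζ/(b√2) and T = (4/b) ∫₀^{π/2} dφ/√(1 − γ² sin²φ). Then W is T-periodic: W(t + T) = W(t) for all t ∈ ℝ. -/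
open Real MeasureTheory Set Filter

/-- Conservation of energy for the Duffing system `x' = y`, `y' = -λx - x³`. -/
theorem duffing_energy_eq {lam : ℝ} {x y : ℝ → ℝ} (hx : ∀ t, HasDerivAt x (y t) t)
    (hy : ∀ t, HasDerivAt y (-(lam * x t) - x t ^ 3) t) (t s : ℝ) :
    y t ^ 2 + lam * x t ^ 2 + x t ^ 4 / 2 = y s ^ 2 + lam * x s ^ 2 + x s ^ 4 / 2 := by
  have hE : ∀ t, HasDerivAt (fun t => y t ^ 2 + lam * x t ^ 2 + x t ^ 4 / 2) 0 t := by
    intro t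
    have h := (((hy t).pow 2).add (((hx t).pow 2).const_mul lam)).add (((hx t).pow 4).div_const 2)
    refine h.congr_deriv ?_
    push_cast
    ring
  exact is_const_of_deriv_eq_zero (fun t => (hE t).differentiableAt) (fun t => (hE t).deriv) t s

/-- Trajectories of the Duffing system with `λ > 0` are bounded in terms of their energy. -/
theorem duffing_mem_closedBall {lam : ℝ} (hlam : 0 < lam) {x y : ℝ → ℝ}
    (hx : ∀ t, HasDerivAt x (y t) t) (hy : ∀ t, HasDerivAt y (-(lam * x t) - x t ^ 3) t)
    {E : ℝ} (hE : y 0 ^ 2 + lam * x 0 ^ 2 + x 0 ^ 4 / 2 = E) (t : ℝ) :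
    (x t, y t) ∈ Metric.closedBall (0 : ℝ × ℝ) (1 + E + E / lam) := by
  have h := (duffing_energy_eq hx hy t 0).trans hE
  have hx2 : 0 ≤ lam * x t ^ 2 := by positivity
  have hx4 : 0 ≤ x t ^ 4 / 2 := by positivity
  have hyE : y t ^ 2 ≤ E := by linarith
  have hxE : x t ^ 2 ≤ E / lam := by
    rw [le_div_iff₀ hlam]
    nlinarith [sq_nonneg (y t)]
  have hE0 : 0 ≤ E := (sq_nonneg _).trans hyE
  have hE1 : 0 ≤ E / lam := by positivity
  rw [mem_closedBall_zero_iff, Prod.norm_mk, Real.norm_eq_abs, Real.norm_eq_abs]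
  refine max_le (abs_le_of_sq_le_sq ?_ (by positivity)) (abs_le_of_sq_le_sq ?_ (by positivity))
  · nlinarith [mul_nonneg hE0 hE1]
  · nlinarith [mul_nonneg hE0 hE1]

/-- Uniqueness for the Cauchy problem of the Duffing system. -/
theorem duffing_unique {lam : ℝ} (hlam : 0 < lam) {x y u v : ℝ → ℝ}
    (hx : ∀ t, HasDerivAt x (y t) t) (hy : ∀ t, HasDerivAt y (-(lam * x t) - x t ^ 3) t)
    (hu : ∀ t, HasDerivAt u (v t) t) (hv : ∀ t, HasDerivAt v (-(lam * u t) - u t ^ 3) t)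
    (hxu : x 0 = u 0) (hyv : y 0 = v 0) : x = u := by
  set E := y 0 ^ 2 + lam * x 0 ^ 2 + x 0 ^ 4 / 2 with hE
  have hf : ContDiff ℝ 1 (fun p : ℝ × ℝ => (p.2, -(lam * p.1) - p.1 ^ 3)) := by fun_prop
  obtain ⟨K, hK⟩ := hf.contDiffOn.exists_lipschitzOnWith one_ne_zero
    (convex_closedBall (0 : ℝ × ℝ) (1 + E + E / lam)) (isCompact_closedBall _ _)
  have h := ODE_solution_unique_univ (t₀ := 0) (fun _ => hK)
    (fun t => ⟨(hx t).prodMk (hy t), duffing_mem_closedBall hlam hx hy hE.symm t⟩)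
    (fun t => ⟨(hu t).prodMk (hv t),
      duffing_mem_closedBall hlam hu hv (by rw [hE, hxu, hyv]) t⟩)
    (by rw [hxu, hyv])
  exact funext fun t => congrArg Prod.fst (congrFun h t)

/-- A scalar autonomous equation `θ' = h(θ)` with `h` continuous, positive, bounded and
`P`-periodic has a global solution vanishing at `0`, and it gains `P` over the time `∫₀ᴾ 1/h`. -/
theorem exists_phase_of_periodic {h : ℝ → ℝ} {b P : ℝ} (hc : Continuous h) (hpos : ∀ s, 0 < h s)
    (hb : ∀ s, h s ≤ b) (hP : Function.Periodic h P) :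
    ∃ θ : ℝ → ℝ, θ 0 = 0 ∧ (∀ t, HasDerivAt θ (h (θ t)) t) ∧
      ∀ t, θ (t + ∫ s in (0 : ℝ)..P, 1 / h s) = θ t + P := by
  have hb0 : 0 < b := (hpos 0).trans_le (hb 0)
  have hgc : Continuous fun s => 1 / h s := continuous_const.div hc fun s => (hpos s).ne'
  have hgP : Function.Periodic (fun s => 1 / h s) P := fun s => by simp only [hP s]
  set F : ℝ → ℝ := fun r => ∫ s in (0 : ℝ)..r, 1 / h s with hF
  have hF' : ∀ r, HasDerivAt F (1 / h r) r :=
    fun r => (hgc.integral_hasStrictDerivAt 0 r).hasDerivAt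
  have hFd : Differentiable ℝ F := fun r => (hF' r).differentiableAt
  have hF0 : F 0 = 0 := by simp [hF]
  have hmono : StrictMono F := strictMono_of_deriv_pos fun r => by
    rw [(hF' r).deriv]
    exact one_div_pos.2 (hpos r)
  have hgrow := mul_sub_le_image_sub_of_le_deriv hFd (C := 1 / b) fun r => by
    rw [(hF' r).deriv]
    exact one_div_le_one_div_of_le (hpos r) (hb r)
  have hlin : 0 < 1 / b := one_div_pos.2 hb0
  have hsurj : Function.Surjective F := by
    refine hFd.continuous.surjective ?_ ?_
    · refine tendsto_atTop_mono' _ ?_ (tendsto_id.const_mul_atTop hlin)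
      filter_upwards [eventually_ge_atTop 0] with r hr
      simpa [hF0] using hgrow hr
    · refine tendsto_atBot_mono' _ ?_ (tendsto_id.const_mul_atBot hlin)
      filter_upwards [eventually_le_atBot 0] with r hr
      have := hgrow hr
      simp only [hF0, id] at this ⊢
      linarith
  set e := hmono.orderIsoOfSurjective F hsurj
  have hFe : ∀ t, F (e.symm t) = t := e.apply_symm_apply
  refine ⟨e.symm, hmono.injective (by rw [hFe, hF0]), fun t => ?_, fun t => hmono.injective ?_⟩
  · have hd := HasDerivAt.of_local_left_inverse e.symm.continuous.continuousAt (hF' (e.symm t))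
      (one_div_pos.2 (hpos _)).ne' (Eventually.of_forall hFe)
    simpa using hd
  · rw [hFe]
    have hadd : F (e.symm t + P) = F (e.symm t) + ∫ s in e.symm t..(e.symm t + P), 1 / h s :=
      (intervalIntegral.integral_add_adjacent_intervals (hgc.intervalIntegrable _ _)
        (hgc.intervalIntegrable _ _)).symm
    rw [hadd, hgP.intervalIntegral_add_eq (e.symm t) 0, zero_add, hFe]

/-- The integral over `[0, 2π]` of a continuous function of `sin²` is four times the integral over
a quarter period. -/
theorem integral_comp_sin_sq_two_pi {g : ℝ → ℝ} (hg : Continuous fun s => g (sin s ^ 2)) :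
    ∫ s in (0 : ℝ)..(2 * π), g (sin s ^ 2) = 4 * ∫ s in (0 : ℝ)..(π / 2), g (sin s ^ 2) := by
  have hi : ∀ a c : ℝ, IntervalIntegrable (fun s => g (sin s ^ 2)) volume a c :=
    fun a c => hg.intervalIntegrable a c
  have hper : Function.Periodic (fun s => g (sin s ^ 2)) π := fun s => by simp [sin_add_pi]
  have hrefl : ∫ s in (π / 2)..π, g (sin s ^ 2) = ∫ s in (0 : ℝ)..(π / 2), g (sin s ^ 2) := by
    have h := intervalIntegral.integral_comp_sub_left (a := 0) (b := π / 2)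
      (fun s => g (sin s ^ 2)) π
    simp only [sin_pi_sub, sub_zero, sub_half] at h
    exact h.symm
  have hshift : ∫ s in π..(2 * π), g (sin s ^ 2) = ∫ s in (0 : ℝ)..π, g (sin s ^ 2) := by
    have h := hper.intervalIntegral_add_eq π 0
    rwa [zero_add, ← two_mul] at h
  rw [← intervalIntegral.integral_add_adjacent_intervals (hi 0 π) (hi π (2 * π)), hshift,
    ← intervalIntegral.integral_add_adjacent_intervals (hi 0 (π / 2)) (hi (π / 2) π), hrefl]
  ring

/-- If `θ' = √(λ + ζ² - ζ²/2 sin²θ)`, then `ζ cos θ` solves the Duffing equation. -/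
theorem hasDerivAt_duffing_of_phase {lam ζ : ℝ} (hlam : 0 < lam) {θ : ℝ → ℝ}
    (hθ : ∀ t, HasDerivAt θ (√(lam + ζ ^ 2 - ζ ^ 2 / 2 * sin (θ t) ^ 2)) t) (t : ℝ) :
    HasDerivAt (fun t => ζ * cos (θ t))
        (-(ζ * sin (θ t) * √(lam + ζ ^ 2 - ζ ^ 2 / 2 * sin (θ t) ^ 2))) t ∧
      HasDerivAt (fun t => -(ζ * sin (θ t) * √(lam + ζ ^ 2 - ζ ^ 2 / 2 * sin (θ t) ^ 2)))
        (-(lam * (ζ * cos (θ t))) - (ζ * cos (θ t)) ^ 3) t := by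
  have hpos : 0 < lam + ζ ^ 2 - ζ ^ 2 / 2 * sin (θ t) ^ 2 := by
    nlinarith [sq_nonneg ζ, mul_nonneg (sq_nonneg ζ) (sub_nonneg.2 (sin_sq_le_one (θ t)))]
  have hsqrt := Real.sq_sqrt hpos.le
  have hne := (Real.sqrt_pos.2 hpos).ne'
  have hsin := (hθ t).sin
  have hroot := (((hsin.pow 2).const_mul (ζ ^ 2 / 2)).const_sub (lam + ζ ^ 2)).sqrt hpos.ne'
  constructor
  · refine ((hθ t).cos.const_mul ζ).congr_deriv ?_
    ring
  · refine ((hsin.const_mul ζ).mul hroot).neg.congr_deriv ?_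
    simp only [Pi.pow_apply]
    set r := √(lam + ζ ^ 2 - ζ ^ 2 / 2 * sin (θ t) ^ 2)
    field_simp
    push_cast
    have hs : sin (θ t) ^ 2 = 1 - cos (θ t) ^ 2 := by linarith [sin_sq_add_cos_sq (θ t)]
    linear_combination (-4 * ζ * cos (θ t)) * hsqrt + 4 * ζ ^ 3 * cos (θ t) * hs

/-- Periodicity of the Duffing solution: the solution of
`W'' + λW + W³ = 0`, `W(0) = ζ > 0`, `W'(0) = 0` is `T`-periodic with
`T = (4/b) ∫₀^{π/2} dφ/√(1 - γ² sin²φ)`, where `b = √(λ + ζ²)` and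
`γ = ζ/(b√2)`. -/
theorem stmt14 (lam ζ : ℝ) (hlam : 0 < lam) (hζ : 0 < ζ)
    (W : ℝ → ℝ) (hW1 : Differentiable ℝ W) (hW2 : Differentiable ℝ (deriv W))
    (hode : ∀ t, deriv (deriv W) t + lam * W t + W t ^ 3 = 0)
    (hW0 : W 0 = ζ) (hW0' : deriv W 0 = 0) :
    ∀ t : ℝ,
      W (t + (4 / Real.sqrt (lam + ζ ^ 2)) *
        ∫ φ in (0 : ℝ)..(π / 2),
          1 / Real.sqrt (1 - (ζ / (Real.sqrt (lam + ζ ^ 2) * Real.sqrt 2)) ^ 2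
            * Real.sin φ ^ 2)) = W t := by
  have hb2 : 0 < lam + ζ ^ 2 := by positivity
  set b := √(lam + ζ ^ 2) with hb
  have hb0 : 0 < b := Real.sqrt_pos.2 hb2
  have hbsq : b ^ 2 = lam + ζ ^ 2 := Real.sq_sqrt hb2.le
  set g : ℝ → ℝ := fun q => √(lam + ζ ^ 2 - ζ ^ 2 / 2 * q) with hg
  have hgc : Continuous fun s => g (sin s ^ 2) := by fun_prop
  have hgpos : ∀ s, 0 < g (sin s ^ 2) := fun s => Real.sqrt_pos.2 <| by
    nlinarith [sq_nonneg ζ, mul_nonneg (sq_nonneg ζ) (sub_nonneg.2 (sin_sq_le_one s))]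
  obtain ⟨θ, hθ0, hθ, hθT⟩ := exists_phase_of_periodic (b := b) (P := 2 * π) hgc hgpos
    (fun s => Real.sqrt_le_sqrt (by nlinarith [mul_nonneg (sq_nonneg ζ) (sq_nonneg (sin s))]))
    (fun s => by simp only [sin_add_two_pi])
  have hgb : ∀ s, 1 / g (sin s ^ 2) = 1 / b * (1 / √(1 - (ζ / (b * √2)) ^ 2 * sin s ^ 2)) := by
    intro s
    have hfac : lam + ζ ^ 2 - ζ ^ 2 / 2 * sin s ^ 2
        = b ^ 2 * (1 - (ζ / (b * √2)) ^ 2 * sin s ^ 2) := by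
      rw [div_pow, mul_pow, Real.sq_sqrt (by norm_num : (0 : ℝ) ≤ 2), ← hbsq]
      field_simp
    rw [hg]
    dsimp only
    rw [hfac, Real.sqrt_mul (sq_nonneg b), Real.sqrt_sq hb0.le, one_div_mul_one_div]
  have hT : ∫ s in (0 : ℝ)..(2 * π), 1 / g (sin s ^ 2)
      = 4 / b * ∫ φ in (0 : ℝ)..(π / 2), 1 / √(1 - (ζ / (b * √2)) ^ 2 * sin φ ^ 2) := by
    rw [integral_comp_sin_sq_two_pi (g := fun q => 1 / g q)
      (continuous_const.div hgc fun s => (hgpos s).ne')]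
    simp only [hgb, intervalIntegral.integral_const_mul]
    ring
  have hWθ : W = fun t => ζ * cos (θ t) :=
    duffing_unique hlam (fun t => (hW1 t).hasDerivAt)
      (fun t => (hW2 t).hasDerivAt.congr_deriv (by linarith [hode t]))
      (fun t => (hasDerivAt_duffing_of_phase hlam hθ t).1)
      (fun t => (hasDerivAt_duffing_of_phase hlam hθ t).2)
      (by simp [hW0, hθ0]) (by simp [hW0', hθ0])
  intro t
  rw [← hT, hWθ]
  simp only [hθT, cos_add_two_pi]
end

section
/- Let a < b be real numbers and let T : ℝ → ℝ be integrable on (a, b). If ∫_a^b T(x) φ''(x) dx = 0 for every smooth function φ : ℝ → ℝ with compact support contained in (a, b), then there exist constants c₀, c₁ ∈ ℝ such that T(x) = c₀ x + c₁ for a.e. x ∈ (a, b). -/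
open Real MeasureTheory Set Filter

/-- A smooth function on `ℝ` with compact support contained in `(a, b)`. -/
structure IsTestFunctionOn (a b : ℝ) (φ : ℝ → ℝ) : Prop where
  contDiff : ContDiff ℝ (⊤ : ℕ∞) φ
  hasCompactSupport : HasCompactSupport φ
  tsupport_subset : tsupport φ ⊆ Ioo a b

namespace IsTestFunctionOn

variable {a b : ℝ} {φ ψ : ℝ → ℝ}

theorem of_support_subset_Icc {c d : ℝ} (hφ : ContDiff ℝ (⊤ : ℕ∞) φ) (hac : a < c) (hdb : d < b)
    (h : Function.support φ ⊆ Icc c d) : IsTestFunctionOn a b φ where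
  contDiff := hφ
  hasCompactSupport := HasCompactSupport.of_support_subset_isCompact isCompact_Icc h
  tsupport_subset := (closure_minimal h isClosed_Icc).trans (Icc_subset_Ioo hac hdb)

theorem apply_eq_zero (hφ : IsTestFunctionOn a b φ) {x : ℝ} (hx : x ∉ Ioo a b) : φ x = 0 :=
  image_eq_zero_of_notMem_tsupport fun h => hx (hφ.tsupport_subset h)

theorem deriv (hφ : IsTestFunctionOn a b φ) : IsTestFunctionOn a b (deriv φ) where
  contDiff := (contDiff_infty_iff_deriv.1 hφ.contDiff).2
  hasCompactSupport := hφ.hasCompactSupport.deriv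
  tsupport_subset := (tsupport_deriv_subset).trans hφ.tsupport_subset

theorem mul_left (hφ : IsTestFunctionOn a b φ) {f : ℝ → ℝ} (hf : ContDiff ℝ (⊤ : ℕ∞) f) :
    IsTestFunctionOn a b (fun x => f x * φ x) where
  contDiff := hf.mul hφ.contDiff
  hasCompactSupport := hφ.hasCompactSupport.mul_left
  tsupport_subset := (tsupport_mul_subset_right (f := f)).trans hφ.tsupport_subset

theorem id_mul (hφ : IsTestFunctionOn a b φ) : IsTestFunctionOn a b (fun x => x * φ x) :=
  hφ.mul_left contDiff_id

theorem sub (hφ : IsTestFunctionOn a b φ) (hψ : IsTestFunctionOn a b ψ) :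
    IsTestFunctionOn a b (fun x => φ x - ψ x) where
  contDiff := hφ.contDiff.sub hψ.contDiff
  hasCompactSupport := hφ.hasCompactSupport.sub hψ.hasCompactSupport
  tsupport_subset := (tsupport_sub φ ψ).trans (union_subset hφ.tsupport_subset hψ.tsupport_subset)

theorem differentiable (hφ : IsTestFunctionOn a b φ) : Differentiable ℝ φ :=
  hφ.contDiff.differentiable (by simp)

theorem integrable (hφ : IsTestFunctionOn a b φ) : IntegrableOn φ (Ioo a b) :=
  (hφ.contDiff.continuous.integrable_of_hasCompactSupport hφ.hasCompactSupport).integrableOn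

theorem integrable_mul (hφ : IsTestFunctionOn a b φ) {f : ℝ → ℝ} (hf : IntegrableOn f (Ioo a b)) :
    IntegrableOn (fun x => f x * φ x) (Ioo a b) := by
  obtain ⟨C, hC⟩ := hφ.hasCompactSupport.exists_bound_of_continuous hφ.contDiff.continuous
  exact hf.mul_bdd hφ.contDiff.continuous.aestronglyMeasurable (ae_of_all _ hC)

theorem setIntegral_deriv (hφ : IsTestFunctionOn a b φ) (hab : a ≤ b) :
    ∫ x in Ioo a b, _root_.deriv φ x = 0 := by
  rw [← integral_Ioc_eq_integral_Ioo, ← intervalIntegral.integral_of_le hab,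
    intervalIntegral.integral_deriv_eq_sub (fun x _ => hφ.differentiable x)
      (hφ.deriv.contDiff.continuous.intervalIntegrable a b),
    hφ.apply_eq_zero (by simp), hφ.apply_eq_zero (by simp), sub_zero]

/-- Integration by parts against the identity function. -/
theorem setIntegral_id_mul_deriv (hφ : IsTestFunctionOn a b φ) (hab : a ≤ b) :
    ∫ x in Ioo a b, x * _root_.deriv φ x = -∫ x in Ioo a b, φ x := by
  have h := hφ.id_mul.setIntegral_deriv hab
  have hd : _root_.deriv (fun x => x * φ x) = fun x => φ x + x * _root_.deriv φ x := by
    funext x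
    refine ((hasDerivAt_id x).mul (hφ.differentiable x).hasDerivAt).deriv.trans ?_
    simp
  simp only [hd] at h
  rw [integral_add hφ.integrable hφ.deriv.id_mul.integrable] at h
  linarith

/-- A test function with zero mean is the derivative of a test function. -/
theorem exists_deriv_eq (hφ : IsTestFunctionOn a b φ) (hab : a < b)
    (h0 : ∫ x in Ioo a b, φ x = 0) : ∃ Φ, IsTestFunctionOn a b Φ ∧ _root_.deriv Φ = φ := by
  have hcont := hφ.contDiff.continuous
  have hderiv : ∀ x, HasDerivAt (fun x => ∫ t in a..x, φ t) (φ x) x := fun x =>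
    intervalIntegral.integral_hasDerivAt_right (hcont.intervalIntegrable a x)
      (hcont.stronglyMeasurableAtFilter _ _) hcont.continuousAt
  have hd : _root_.deriv (fun x => ∫ t in a..x, φ t) = φ := funext fun x => (hderiv x).deriv
  have hK : IsCompact (insert ((a + b) / 2) (tsupport φ)) :=
    IsCompact.insert hφ.hasCompactSupport _
  have hsub : insert ((a + b) / 2) (tsupport φ) ⊆ Ioo a b :=
    insert_subset ⟨by linarith, by linarith⟩ hφ.tsupport_subset
  obtain ⟨c, hc, hc'⟩ := hK.exists_isLeast (insert_nonempty _ _)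
  obtain ⟨d, hd₀, hd'⟩ := hK.exists_isGreatest (insert_nonempty _ _)
  have hac := (hsub hc).1
  have hdb := (hsub hd₀).2
  have hleft : ∀ t < c, φ t = 0 := fun t ht =>
    image_eq_zero_of_notMem_tsupport fun h => ht.not_ge (hc' (mem_insert_of_mem _ h))
  have hright : ∀ t, d < t → φ t = 0 := fun t ht =>
    image_eq_zero_of_notMem_tsupport fun h => ht.not_ge (hd' (mem_insert_of_mem _ h))
  have hint_zero : ∀ u v, (∀ t ∈ uIcc u v, φ t = 0) → ∫ t in u..v, φ t = 0 := fun u v h => by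
    rw [intervalIntegral.integral_congr (g := fun _ => (0 : ℝ)) h, intervalIntegral.integral_zero]
  refine ⟨fun x => ∫ t in a..x, φ t, of_support_subset_Icc (c := c) (d := d)
    (contDiff_infty_iff_deriv.2 ⟨fun x => (hderiv x).differentiableAt, hd.symm ▸ hφ.contDiff⟩)
    hac hdb ?_, hd⟩
  intro x hx
  by_contra hxI
  refine hx ?_
  rcases lt_or_ge x c with hxc | hxc
  · exact hint_zero a x fun t ht => hleft t (ht.2.trans_lt (max_lt hac hxc))
  · have hxd : d < x := lt_of_not_ge fun h => hxI ⟨hxc, h⟩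
    change ∫ t in a..x, φ t = 0
    rw [← intervalIntegral.integral_add_adjacent_intervals (hcont.intervalIntegrable a b)
      (hcont.intervalIntegrable b x), intervalIntegral.integral_of_le hab.le,
      integral_Ioc_eq_integral_Ioo, h0,
      hint_zero b x fun t ht => hright t ((lt_min hdb hxd).trans_le ht.1), add_zero]

theorem exists_setIntegral_eq_one (hab : a < b) :
    ∃ η, IsTestFunctionOn a b η ∧ ∫ x in Ioo a b, η x = 1 := by
  let f : ContDiffBump ((a + b) / 2) := ⟨(b - a) / 8, (b - a) / 4, by linarith, by linarith⟩
  have hη : IsTestFunctionOn a b (f.normed volume) := by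
    refine ⟨f.contDiff_normed, f.hasCompactSupport_normed, ?_⟩
    rw [f.tsupport_normed_eq, Real.closedBall_eq_Icc]
    exact Icc_subset_Ioo (by change a < _ - (b - a) / 4; linarith)
      (by change _ + (b - a) / 4 < b; linarith)
  refine ⟨_, hη, ?_⟩
  rw [setIntegral_eq_integral_of_forall_compl_eq_zero fun x hx => hη.apply_eq_zero hx,
    f.integral_normed]

/-- Given `η` of integral one, subtracting `(∫ φ) η` from a test function `φ` yields
the derivative of a test function. -/
theorem exists_deriv_eq_sub {η : ℝ → ℝ} (hφ : IsTestFunctionOn a b φ) (hab : a < b)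
    (hη : IsTestFunctionOn a b η) (h1 : ∫ x in Ioo a b, η x = 1) :
    ∃ Φ, IsTestFunctionOn a b Φ ∧
      _root_.deriv Φ = fun x => φ x - (∫ t in Ioo a b, φ t) * η x := by
  have hη' := hη.mul_left (contDiff_const (c := ∫ t in Ioo a b, φ t))
  refine (hφ.sub hη').exists_deriv_eq hab ?_
  rw [integral_sub hφ.integrable hη'.integrable, integral_const_mul, h1, mul_one, sub_self]

end IsTestFunctionOn

/-- An integrable function on `(a, b)` with vanishing distributional derivative is constant a.e. -/
theorem ae_eq_const_of_forall_setIntegral_mul_deriv_eq_zero {a b : ℝ} (hab : a < b) {f : ℝ → ℝ}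
    (hf : IntegrableOn f (Ioo a b))
    (h : ∀ φ, IsTestFunctionOn a b φ → ∫ x in Ioo a b, f x * deriv φ x = 0) :
    ∃ c, ∀ᵐ x ∂(volume.restrict (Ioo a b)), f x = c := by
  obtain ⟨η, hη, h1⟩ := IsTestFunctionOn.exists_setIntegral_eq_one hab
  set c := ∫ x in Ioo a b, f x * η x with hc
  have hfc : IntegrableOn (fun x => f x - c) (Ioo a b) := hf.sub (integrable_const c)
  have key := isOpen_Ioo.ae_eq_zero_of_integral_contDiff_smul_eq_zero (U := Ioo a b)
    (hfc.locallyIntegrable.locallyIntegrableOn _) fun g hg hgc hgs => by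
      have hφ : IsTestFunctionOn a b g := ⟨hg, hgc, hgs⟩
      obtain ⟨Φ, hΦ, hd⟩ := hφ.exists_deriv_eq_sub hab hη h1
      have h0 := h Φ hΦ
      simp only [hd, mul_sub, mul_left_comm (f _)] at h0
      rw [integral_sub (hφ.integrable_mul hf) ((hη.integrable_mul hf).const_mul _),
        integral_const_mul, ← hc] at h0
      simp only [smul_eq_mul, mul_comm (g _), sub_mul]
      rw [integral_sub (hφ.integrable_mul hf) (hφ.integrable.const_mul _), integral_const_mul]
      linarith
  refine ⟨c, ?_⟩
  filter_upwards [key, ae_restrict_mem measurableSet_Ioo] with x hx hxI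
  exact sub_eq_zero.1 (hx hxI)

/-- du Bois–Reymond lemma: an integrable function on `(a, b)` whose second
distributional derivative vanishes (i.e. `∫ T φ'' = 0` for all smooth `φ`
compactly supported in `(a, b)`) is affine a.e. on `(a, b)`. -/
theorem stmt15 (a b : ℝ) (hab : a < b) (T : ℝ → ℝ)
    (hT : IntegrableOn T (Set.Ioo a b))
    (hweak : ∀ φ : ℝ → ℝ, ContDiff ℝ (⊤ : ℕ∞) φ → HasCompactSupport φ →
      tsupport φ ⊆ Set.Ioo a b →
      (∫ x in Set.Ioo a b, T x * deriv (deriv φ) x) = 0) :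
    ∃ c₀ c₁ : ℝ, ∀ᵐ x ∂(volume.restrict (Set.Ioo a b)), T x = c₀ * x + c₁ := by
  obtain ⟨η, hη, h1⟩ := IsTestFunctionOn.exists_setIntegral_eq_one hab
  set B := ∫ x in Ioo a b, T x * deriv η x with hB
  have hid : IntegrableOn (fun x : ℝ => B * x) (Ioo a b) :=
    ((continuous_const.mul continuous_id).integrableOn_Icc).mono_set Ioo_subset_Icc_self
  obtain ⟨c, hc⟩ := ae_eq_const_of_forall_setIntegral_mul_deriv_eq_zero hab (hT.add hid)
    fun ψ hψ => by
      obtain ⟨Φ, hΦ, hd⟩ := hψ.exists_deriv_eq_sub hab hη h1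
      have h0 := hweak Φ hΦ.contDiff hΦ.hasCompactSupport hΦ.tsupport_subset
      have hdd : deriv (deriv Φ) = fun x => deriv ψ x - (∫ t in Ioo a b, ψ t) * deriv η x := by
        rw [hd]
        funext x
        exact ((hψ.differentiable x).hasDerivAt.sub
          ((hη.differentiable x).hasDerivAt.const_mul _)).deriv
      simp only [hdd, mul_sub, mul_left_comm (T _)] at h0
      rw [integral_sub (hψ.deriv.integrable_mul hT) ((hη.deriv.integrable_mul hT).const_mul _),
        integral_const_mul, ← hB] at h0
      simp only [Pi.add_apply, add_mul, mul_assoc]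
      rw [integral_add (hψ.deriv.integrable_mul hT)
        (hψ.deriv.id_mul.integrable.const_mul B), integral_const_mul,
        hψ.setIntegral_id_mul_deriv hab.le]
      linarith
  refine ⟨-B, c, ?_⟩
  filter_upwards [hc] with x hx
  simp only [Pi.add_apply] at hx
  linarith
end

section
/- Let 0 < a < 1, 0 < α < 1 < β, λ ∈ ℝ, and let p : ℝ → ℝ be measurable with α ≤ p(x) ≤ β for a.e. x ∈ [−π, π]. Suppose e : ℝ → ℝ is continuously differentiable on [−π, π] and there is an integrable function g : ℝ → ℝ with e'(x) = e'(−π) + ∫_{−π}^{x} g(t) dt for all x ∈ [−π, π], and suppose that for every twice continuously differentiable function v : ℝ → ℝ with v(−π) = v(π) = v(−aπ) = v(aπ) = 0 one has ∫_{−π}^{π} g(x) v''(x) dx = λ ∫_{−π}^{π} p(x) e(x) v(x) dx. Then g coincides a.e. on [−π, π] with a continuous function G, and on each of the three spans [−π, −aπ], [−aπ, aπ], [aπ, π], with left endpoint denoted ξᵢ, there exist constants cᵢ, dᵢ ∈ ℝ such that G(x) = cᵢ x + dᵢ + λ ∫_{ξᵢ}^{x} (x − t) p(t) e(t) dt for all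 x in that span. In particular e is twice continuously differentiable on [−π, π], three times continuously differentiable on each closed span, and e'''' = λ p e a.e. in (−π, π). -/
open Real MeasureTheory Set Filter

/-- The kernel `(x - t)⁺` on `[a, b]` reproduces the Volterra integral. -/
theorem setIntegral_posPart_mul_eq {a b x : ℝ} (hx : x ∈ Icc a b) (w : ℝ → ℝ) :
    ∫ t in Icc a b, max (x - t) 0 * w t = ∫ t in a..x, (x - t) * w t := by
  rw [intervalIntegral.integral_of_le hx.1, ← integral_Icc_eq_integral_Ioc,
    setIntegral_eq_of_subset_of_forall_sdiff_eq_zero (s := Icc a x) measurableSet_Icc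
      (Icc_subset_Icc_right hx.2)]
  · refine setIntegral_congr_fun measurableSet_Icc fun t ht => ?_
    simp [max_eq_left (sub_nonneg.2 ht.2)]
  · intro t ht
    have : x < t := by
      by_contra! h
      exact ht.2 ⟨ht.1.1, h⟩
    simp [max_eq_right (sub_nonpos.2 this.le)]

theorem hasDerivAt_integral_sub_mul {q : ℝ → ℝ} (hq : ∀ a b, IntervalIntegrable q volume a b)
    (c x : ℝ) :
    HasDerivAt (fun y => ∫ t in c..y, (y - t) * q t) (∫ t in c..x, q t) x := by
  have hq' : ∀ y a b, IntervalIntegrable (fun t => (y - t) * q t) volume a b := fun y a b =>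
    (hq a b).continuousOn_mul (by fun_prop)
  have key : ∀ y, (∫ t in c..y, (y - t) * q t) - (∫ t in c..x, (x - t) * q t)
      - (y - x) • (∫ t in c..x, q t) = ∫ t in x..y, (y - t) * q t := by
    intro y
    rw [← intervalIntegral.integral_add_adjacent_intervals (hq' y c x) (hq' y x y), smul_eq_mul,
      ← intervalIntegral.integral_const_mul]
    have : ∫ t in c..x, (y - t) * q t
        = (∫ t in c..x, (x - t) * q t) + ∫ t in c..x, (y - x) * q t := by
      rw [← intervalIntegral.integral_add (hq' x c x) ((hq c x).const_mul _)]
      congr 1; ext t; ring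
    rw [this]; ring
  rw [hasDerivAt_iff_isLittleO]
  simp_rw [key]
  have hN : ∀ a b, IntervalIntegrable (fun t => ‖q t‖) volume a b := fun a b => (hq a b).norm
  have hlim : Tendsto (fun y => |∫ t in x..y, ‖q t‖|) (nhds x) (nhds 0) := by
    have := ((intervalIntegral.continuous_primitive hN x).abs).tendsto x
    simpa using this
  rw [Asymptotics.isLittleO_iff]
  intro ε hε
  filter_upwards [hlim.eventually (ge_mem_nhds hε)] with y hy
  calc ‖∫ t in x..y, (y - t) * q t‖ ≤ |∫ t in x..y, |y - x| * ‖q t‖| := by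
        apply intervalIntegral.norm_integral_le_abs_of_norm_le
        · refine (ae_restrict_mem measurableSet_uIoc).mono fun t ht => ?_
          rw [norm_mul]
          exact mul_le_mul_of_nonneg_right (abs_sub_right_of_mem_uIcc (uIoc_subset_uIcc ht))
            (norm_nonneg _)
        · exact (hN _ _).const_mul _
    _ = |∫ t in x..y, ‖q t‖| * ‖y - x‖ := by
        rw [intervalIntegral.integral_const_mul, abs_mul, abs_abs, mul_comm, Real.norm_eq_abs]
    _ ≤ ε * ‖y - x‖ := by gcongr

/-- Fubini for the kernel `(x - t)⁺`. -/
theorem setIntegral_mul_integral_sub_mul {a b : ℝ} {q w : ℝ → ℝ} (hq : IntegrableOn q (Icc a b))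
    (hw : IntegrableOn w (Icc a b)) :
    ∫ x in Icc a b, q x * ∫ t in a..x, (x - t) * w t
      = ∫ t in Icc a b,
          ((∫ x in Icc a b, (x - t) * q x) + ∫ x in a..t, (t - x) * q x) * w t := by
  have hmax : ∀ x ∈ Icc a b, ∀ t ∈ Icc a b, ‖max (x - t) 0‖ ≤ b - a := fun x hx t ht => by
    rw [Real.norm_of_nonneg (le_max_right _ _)]
    exact max_le (by linarith [hx.2, ht.1]) (by linarith [hx.1, hx.2])
  have hint : Integrable (fun z : ℝ × ℝ => max (z.1 - z.2) 0 * (q z.1 * w z.2))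
      ((volume.restrict (Icc a b)).prod (volume.restrict (Icc a b))) := by
    refine (hq.mul_prod hw).bdd_mul (c := b - a) (by fun_prop) ?_
    rw [Measure.prod_restrict]
    filter_upwards [ae_restrict_mem (measurableSet_Icc.prod measurableSet_Icc)] with z hz
    exact hmax _ hz.1 _ hz.2
  calc ∫ x in Icc a b, q x * ∫ t in a..x, (x - t) * w t
      = ∫ x in Icc a b, ∫ t in Icc a b, max (x - t) 0 * (q x * w t) := by
        refine setIntegral_congr_fun measurableSet_Icc fun x hx => ?_
        rw [← setIntegral_posPart_mul_eq hx, ← integral_const_mul]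
        congr 1; ext t; ring
    _ = ∫ t in Icc a b, ∫ x in Icc a b, max (x - t) 0 * (q x * w t) :=
        integral_integral_swap hint
    _ = _ := by
        refine setIntegral_congr_fun measurableSet_Icc fun t ht => ?_
        rw [← setIntegral_posPart_mul_eq ht, ← integral_add, ← integral_mul_const]
        · congr 1; ext x
          have : max (x - t) 0 = (x - t) + max (t - x) 0 := by
            rcases le_total x t with h | h <;> simp [h]
          rw [this]; ring
        · exact hq.continuousOn_mul (by fun_prop) isCompact_Icc
        · exact hq.continuousOn_mul (by fun_prop) isCompact_Icc

open Polynomial in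
/-- If a functional of the form `v ↦ ∫ g v'' - μ ∫ q v` annihilates every `C²` function vanishing
at finitely many nodes, then it is a combination of the point evaluations at these nodes. -/
theorem exists_eq_sum_of_eq_on_vanishing {ι : Type*} [Fintype ι] {x : ι → ℝ}
    (hx : Function.Injective x) {a b μ : ℝ} {g q : ℝ → ℝ} (hg : IntegrableOn g (Icc a b))
    (hq : IntegrableOn q (Icc a b))
    (h : ∀ v : ℝ → ℝ, ContDiff ℝ 2 v → (∀ i, v (x i) = 0) →
      ∫ t in Icc a b, g t * deriv (deriv v) t = μ * ∫ t in Icc a b, q t * v t) :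
    ∃ c : ι → ℝ, ∀ v : ℝ → ℝ, ContDiff ℝ 2 v →
      ∫ t in Icc a b, g t * deriv (deriv v) t
        = μ * (∫ t in Icc a b, q t * v t) + ∑ i, c i * v (x i) := by
  classical
  have hgc : ∀ w : ℝ → ℝ, Continuous w → IntegrableOn (fun t => g t * w t) (Icc a b) :=
    fun w hw => hg.mul_continuousOn hw.continuousOn isCompact_Icc
  have hqc : ∀ w : ℝ → ℝ, Continuous w → IntegrableOn (fun t => q t * w t) (Icc a b) :=
    fun w hw => hq.mul_continuousOn hw.continuousOn isCompact_Icc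
  let B : ℝ[X] →ₗ[ℝ] ℝ :=
    { toFun := fun P => (∫ t in Icc a b, g t * P.derivative.derivative.eval t)
        - μ * ∫ t in Icc a b, q t * P.eval t
      map_add' := fun P Q => by
        simp only [derivative_add, eval_add, mul_add]
        rw [integral_add (hgc _ (by fun_prop)) (hgc _ (by fun_prop)),
          integral_add (hqc _ (by fun_prop)) (hqc _ (by fun_prop))]
        ring
      map_smul' := fun r P => by
        simp only [derivative_smul, eval_smul, smul_eq_mul, mul_left_comm _ r,
          integral_const_mul, RingHom.id_apply]
        ring }
  refine ⟨fun i => B (Lagrange.basis Finset.univ x i), fun v hv => ?_⟩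
  set P : ℝ[X] := Lagrange.interpolate Finset.univ x (fun i => v (x i)) with hP
  have hBP : B P = ∑ i, B (Lagrange.basis Finset.univ x i) * v (x i) := by
    rw [hP, Lagrange.interpolate_apply, map_sum]
    refine Finset.sum_congr rfl fun i _ => ?_
    rw [← smul_eq_C_mul, map_smul, smul_eq_mul, mul_comm]
  have hv1 : Differentiable ℝ v := hv.differentiable (by norm_num)
  have hv' : ContDiff ℝ 1 (deriv v) := by
    have : ContDiff ℝ (1 + 1) v := by simpa [one_add_one_eq_two] using hv
    exact (contDiff_succ_iff_deriv.1 this).2.2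
  have hdd : deriv (deriv fun t => v t - P.eval t)
      = fun t => deriv (deriv v) t - P.derivative.derivative.eval t := by
    have h1 : (deriv fun t => v t - P.eval t) = fun t => deriv v t - P.derivative.eval t := by
      ext t
      exact ((hv1 t).hasDerivAt.sub (P.hasDerivAt t)).deriv
    rw [h1]
    ext t
    exact (((hv'.differentiable (by norm_num)) t).hasDerivAt.sub (P.derivative.hasDerivAt t)).deriv
  have key := h (fun t => v t - P.eval t) (hv.sub (by exact P.contDiff_aeval 2)) fun i => by
    rw [hP, Lagrange.eval_interpolate_at_node _ hx.injOn (Finset.mem_univ i), sub_self]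
  rw [hdd] at key
  simp only [mul_sub] at key
  rw [integral_sub (hgc _ (hv'.continuous_deriv le_rfl)) (hgc _ (by fun_prop)),
    integral_sub (hqc _ hv.continuous) (hqc _ (by fun_prop))] at key
  have hB : B P = (∫ t in Icc a b, g t * P.derivative.derivative.eval t)
        - μ * ∫ t in Icc a b, q t * P.eval t := rfl
  linarith

theorem ae_eq_zero_of_forall_integral_mul_continuous {s : Set ℝ} (hs : MeasurableSet s)
    {f : ℝ → ℝ} (hf : IntegrableOn f s)
    (h : ∀ w : ℝ → ℝ, Continuous w → ∫ t in s, f t * w t = 0) :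
    ∀ᵐ t ∂(volume.restrict s), f t = 0 := by
  have hz := ae_eq_zero_of_integral_contDiff_smul_eq_zero (μ := volume)
    ((integrable_indicator_iff hs).2 hf).locallyIntegrable fun w hw _ => by
      rw [← h w hw.continuous, ← integral_indicator hs]
      congr 1; ext t
      by_cases ht : t ∈ s <;> simp [ht, mul_comm]
  rw [ae_restrict_iff' hs]
  filter_upwards [hz] with t ht hts
  simpa [hts] using ht

/-- The second derivative in a weak formulation tested by `C²` functions vanishing at finitely
many nodes is the Volterra potential of the source plus a piecewise linear function with corners
at the nodes. -/
theorem ae_eq_of_weak_form {ι : Type*} [Fintype ι] {x : ι → ℝ} (hx : Function.Injective x)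
    {a b μ : ℝ} (hxab : ∀ i, x i ∈ Icc a b) {g q : ℝ → ℝ} (hg : IntegrableOn g (Icc a b))
    (hq : ∀ a b, IntervalIntegrable q volume a b)
    (h : ∀ v : ℝ → ℝ, ContDiff ℝ 2 v → (∀ i, v (x i) = 0) →
      ∫ t in Icc a b, g t * deriv (deriv v) t = μ * ∫ t in Icc a b, q t * v t) :
    ∃ (k m : ℝ) (c : ι → ℝ), ∀ᵐ t ∂(volume.restrict (Icc a b)),
      g t = k * t + m + μ * (∫ s in a..t, (t - s) * q s) + ∑ i, c i * max (x i - t) 0 := by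
  have hqI : IntegrableOn q (Icc a b) := by
    rcases le_total a b with hab | hab
    · exact (intervalIntegrable_iff_integrableOn_Icc_of_le hab).1 (hq a b)
    · exact (integrableOn_singleton (hx := by simp)).mono_set fun t ht =>
        (le_antisymm (ht.2.trans hab) ht.1 : t = a)
  obtain ⟨c, hc⟩ := exists_eq_sum_of_eq_on_vanishing hx hg hqI h
  refine ⟨-(μ * ∫ s in Icc a b, q s), μ * ∫ s in Icc a b, s * q s, c, ?_⟩
  have hD : Continuous fun t => ∫ s in a..t, (t - s) * q s :=
    continuous_iff_continuousAt.2 fun t => (hasDerivAt_integral_sub_mul hq a t).continuousAt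
  have hA : ∀ t, ∫ s in Icc a b, (s - t) * q s
      = (∫ s in Icc a b, s * q s) - t * ∫ s in Icc a b, q s := by
    intro t
    have hid : IntegrableOn (fun s => s * q s) (Icc a b) :=
      hqI.continuousOn_mul continuousOn_id isCompact_Icc
    rw [← integral_const_mul, ← integral_sub hid (hqI.const_mul t)]
    congr 1; ext s; ring
  set L : ℝ → ℝ := fun t => μ * ((∫ s in Icc a b, (s - t) * q s) + ∫ s in a..t, (t - s) * q s)
    with hL
  set S : ℝ → ℝ := fun t => ∑ i, c i * max (x i - t) 0 with hS
  have hLc : Continuous L := by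
    simp only [hL, hA]
    fun_prop
  have hSc : Continuous S := by fun_prop
  have hLS : IntegrableOn (fun t => L t + S t) (Icc a b) :=
    (hLc.add hSc).continuousOn.integrableOn_compact isCompact_Icc
  have hzero := ae_eq_zero_of_forall_integral_mul_continuous measurableSet_Icc (hg.sub hLS)
    fun w hw => ?_
  · filter_upwards [hzero] with t ht
    rw [sub_eq_zero.1 ht]
    simp only [hL, hS, hA]
    ring
  have hwi : ∀ a b, IntervalIntegrable w volume a b := fun a b => hw.intervalIntegrable a b
  have hwI : IntegrableOn w (Icc a b) := hw.continuousOn.integrableOn_compact isCompact_Icc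
  have hd1 : deriv (fun y => ∫ t in a..y, (y - t) * w t) = fun y => ∫ t in a..y, w t := by
    ext y; exact (hasDerivAt_integral_sub_mul hwi a y).deriv
  have hd2 : deriv (fun y => ∫ t in a..y, w t) = w := by
    ext y; exact hw.deriv_integral w a y
  have hvC : ContDiff ℝ 2 fun y => ∫ t in a..y, (y - t) * w t := by
    rw [show (2 : WithTop ℕ∞) = 1 + 1 by norm_num, contDiff_succ_iff_deriv]
    refine ⟨fun y => (hasDerivAt_integral_sub_mul hwi a y).differentiableAt, by simp, ?_⟩
    rw [hd1, contDiff_one_iff_deriv, hd2]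
    exact ⟨fun y => (intervalIntegral.integral_hasDerivAt_right (hwi a y)
      hw.aestronglyMeasurable.stronglyMeasurableAtFilter hw.continuousAt).differentiableAt, hw⟩
  have hweak := hc _ hvC
  rw [hd1, hd2, setIntegral_mul_integral_sub_mul hqI hwI] at hweak
  have hLw : ∫ t in Icc a b, L t * w t = μ * ∫ t in Icc a b,
      ((∫ x in Icc a b, (x - t) * q x) + ∫ x in a..t, (t - x) * q x) * w t := by
    simp only [hL, mul_assoc, integral_const_mul]
  have hSw : ∫ t in Icc a b, S t * w t
      = ∑ i, c i * ∫ t in a..x i, (x i - t) * w t := by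
    simp only [hS, Finset.sum_mul]
    rw [integral_finsetSum]
    · refine Finset.sum_congr rfl fun i _ => ?_
      rw [← setIntegral_posPart_mul_eq (hxab i), ← integral_const_mul]
      simp only [mul_assoc]
    · intro i _
      exact (Continuous.continuousOn (by fun_prop)).integrableOn_compact isCompact_Icc
  have hgw : IntegrableOn (fun t => g t * w t) (Icc a b) :=
    hg.mul_continuousOn hw.continuousOn isCompact_Icc
  have hLw' : IntegrableOn (fun t => L t * w t) (Icc a b) :=
    (hLc.mul hw).continuousOn.integrableOn_compact isCompact_Icc
  have hSw' : IntegrableOn (fun t => S t * w t) (Icc a b) :=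
    (hSc.mul hw).continuousOn.integrableOn_compact isCompact_Icc
  have : ∫ t in Icc a b, (g - fun t => L t + S t) t * w t
      = (∫ t in Icc a b, g t * w t)
        - ((∫ t in Icc a b, L t * w t) + ∫ t in Icc a b, S t * w t) := by
    rw [← integral_add hLw' hSw', ← integral_sub hgw (by exact hLw'.add hSw')]
    congr 1; ext t; simp only [Pi.sub_apply]; ring
  rw [this, hLw, hSw, hweak, sub_self]

/-- On an interval without interior nodes, an affine function plus a Volterra potential plus a
piecewise linear function is an affine function plus the Volterra potential based at the left
endpoint. -/
theorem exists_affine_add_integral_sub_mul {ι : Type*} [Fintype ι] {x : ι → ℝ} {ξ η : ℝ}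
    (hx : ∀ i, x i ≤ ξ ∨ η ≤ x i) {q : ℝ → ℝ} (hq : ∀ a b, IntervalIntegrable q volume a b)
    (a μ k m : ℝ) (c : ι → ℝ) :
    ∃ k' m' : ℝ, ∀ y ∈ Icc ξ η,
      k * y + m + μ * (∫ s in a..y, (y - s) * q s) + ∑ i, c i * max (x i - y) 0
        = k' * y + m' + μ * ∫ s in ξ..y, (y - s) * q s := by
  have hlin : ∀ i, ∃ k₁ m₁ : ℝ, ∀ y ∈ Icc ξ η, c i * max (x i - y) 0 = k₁ * y + m₁ := by
    intro i
    rcases hx i with h | h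
    · exact ⟨0, 0, fun y hy => by simp [max_eq_right (sub_nonpos.2 (h.trans hy.1))]⟩
    · refine ⟨-c i, c i * x i, fun y hy => ?_⟩
      rw [max_eq_left (sub_nonneg.2 (hy.2.trans h))]
      ring
  choose k₁ m₁ hkm using hlin
  refine ⟨k + μ * (∫ s in a..ξ, q s) + ∑ i, k₁ i,
    m - μ * (∫ s in a..ξ, s * q s) + ∑ i, m₁ i, fun y hy => ?_⟩
  have hq' : ∀ a b, IntervalIntegrable (fun s => (y - s) * q s) volume a b := fun a b =>
    (hq a b).continuousOn_mul (by fun_prop)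
  have hsplit : ∫ s in a..ξ, (y - s) * q s
      = y * (∫ s in a..ξ, q s) - ∫ s in a..ξ, s * q s := by
    rw [← intervalIntegral.integral_const_mul, ← intervalIntegral.integral_sub
      ((hq a ξ).const_mul y) ((hq a ξ).continuousOn_mul (by fun_prop))]
    congr 1; ext s; ring
  rw [Finset.sum_congr rfl fun i _ => hkm i y hy, Finset.sum_add_distrib, ← Finset.sum_mul,
    ← intervalIntegral.integral_add_adjacent_intervals (hq' a ξ) (hq' ξ y), hsplit]
  ring

/-- Regularity of weak eigenfunctions of the weighted beam problem
`e'''' = λ p e` on `(-π, π)` with piers at `±aπ`: if `e ∈ C¹([-π, π])` has an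
absolutely continuous first derivative with (integrable) a.e. second
derivative `g`, and `∫ g v'' = λ ∫ p e v` for all `C²` test functions `v`
vanishing at `±π` and `±aπ`, then `g` agrees a.e. with a continuous function
`G` (the second derivative of `e`), which on each span
`[-π, -aπ]`, `[-aπ, aπ]`, `[aπ, π]` has the explicit Volterra form
`G(x) = cᵢx + dᵢ + λ∫_{ξᵢ}^x (x - t) p(t) e(t) dt`; in particular `e` is `C²`
on `[-π, π]`, `C³` on each closed span, and `e'''' = λ p e` a.e. on each
span. -/
theorem stmt16 (a α β lam : ℝ) (ha0 : 0 < a) (ha1 : a < 1)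
    (hα0 : 0 < α) (hα1 : α < 1) (hβ : 1 < β)
    (p : ℝ → ℝ) (hpmeas : Measurable p)
    (hpbd : ∀ᵐ x ∂(volume.restrict (Set.Icc (-π) π)), α ≤ p x ∧ p x ≤ β)
    (e e' g : ℝ → ℝ)
    (he : ∀ x ∈ Set.Icc (-π) π, HasDerivWithinAt e (e' x) (Set.Icc (-π) π) x)
    (he' : ContinuousOn e' (Set.Icc (-π) π))
    (hg : IntegrableOn g (Set.Icc (-π) π))
    (hac : ∀ x ∈ Set.Icc (-π) π, e' x = e' (-π) + ∫ t in (-π)..x, g t)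
    (hweak : ∀ v : ℝ → ℝ, ContDiff ℝ 2 v →
      v (-π) = 0 → v π = 0 → v (-(a * π)) = 0 → v (a * π) = 0 →
      (∫ x in Set.Icc (-π) π, g x * deriv (deriv v) x)
        = lam * ∫ x in Set.Icc (-π) π, p x * e x * v x) :
    ∃ G : ℝ → ℝ,
      ContinuousOn G (Set.Icc (-π) π) ∧
      (∀ᵐ x ∂(volume.restrict (Set.Icc (-π) π)), g x = G x) ∧
      (∀ x ∈ Set.Icc (-π) π, HasDerivWithinAt e' (G x) (Set.Icc (-π) π) x) ∧
      ∀ s ∈ ({(-π, -(a * π)), (-(a * π), a * π), (a * π, π)} : Set (ℝ × ℝ)),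
        (∃ c d : ℝ, ∀ x ∈ Set.Icc s.1 s.2,
          G x = c * x + d + lam * ∫ t in s.1..x, (x - t) * (p t * e t)) ∧
        ∃ G₃ : ℝ → ℝ,
          ContinuousOn G₃ (Set.Icc s.1 s.2) ∧
          (∀ x ∈ Set.Icc s.1 s.2, HasDerivWithinAt G (G₃ x) (Set.Icc s.1 s.2) x) ∧
          ∀ᵐ x ∂(volume.restrict (Set.Ioo s.1 s.2)),
            HasDerivAt G₃ (lam * (p x * e x)) x := by
  have hπ := Real.pi_pos
  have haπ : 0 < a * π := mul_pos ha0 hπ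
  have haπ' : a * π < π := by nlinarith
  have hpe : IntegrableOn (fun x => p x * e x) (Icc (-π) π) := by
    have hp : IntegrableOn p (Icc (-π) π) := by
      refine IntegrableOn.of_bound (by simp) hpmeas.aestronglyMeasurable β ?_
      filter_upwards [hpbd] with x hx
      rw [Real.norm_of_nonneg (hα0.le.trans hx.1)]
      exact hx.2
    exact hp.mul_continuousOn (fun x hx => (he x hx).continuousWithinAt) isCompact_Icc
  set q : ℝ → ℝ := (Icc (-π) π).indicator fun x => p x * e x
  have hqint : Integrable q := (integrable_indicator_iff measurableSet_Icc).2 hpe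
  have hq : ∀ a b, IntervalIntegrable q volume a b := fun a b => hqint.intervalIntegrable
  have hq_eq : ∀ x ∈ Icc (-π) π, q x = p x * e x := fun x hx => indicator_of_mem hx _
  set node : Fin 4 → ℝ := ![-π, -(a * π), a * π, π] with hnode
  have hmono : StrictMono node := by
    rw [Fin.strictMono_iff_lt_succ]
    intro i
    fin_cases i <;> simp [hnode] <;> linarith
  have hnode_mem : ∀ i, node i ∈ Icc (-π) π := by
    intro i
    fin_cases i <;> constructor <;> simp [hnode] <;> linarith
  obtain ⟨k, m, c, hgG⟩ := ae_eq_of_weak_form (μ := lam) hmono.injective hnode_mem hg hq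
    fun v hv hv0 => by
      rw [hweak v hv (hv0 0) (hv0 3) (hv0 1) (hv0 2)]
      congr 1
      refine setIntegral_congr_fun measurableSet_Icc fun x hx => ?_
      simp only [hq_eq x hx]
  set G : ℝ → ℝ := fun t => k * t + m + lam * (∫ s in (-π)..t, (t - s) * q s)
    + ∑ i, c i * max (node i - t) 0
  have hGc : Continuous G := by
    have hD : Continuous fun t => ∫ s in (-π)..t, (t - s) * q s :=
      continuous_iff_continuousAt.2 fun t => (hasDerivAt_integral_sub_mul hq (-π) t).continuousAt
    fun_prop
  refine ⟨G, hGc.continuousOn, hgG, fun x hx => ?_, ?_⟩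
  · have hderiv : HasDerivAt (fun y => e' (-π) + ∫ t in (-π)..y, G t) (G x) x :=
      (hGc.integral_hasStrictDerivAt (-π) x).hasDerivAt.const_add _
    have hform : ∀ y ∈ Icc (-π) π, e' y = e' (-π) + ∫ t in (-π)..y, G t := by
      intro y hy
      rw [hac y hy, intervalIntegral.integral_of_le hy.1, intervalIntegral.integral_of_le hy.1]
      congr 1
      exact integral_congr_ae (ae_restrict_of_ae_restrict_of_subset
        (Ioc_subset_Icc_self.trans (Icc_subset_Icc_right hy.2)) hgG)
    exact hderiv.hasDerivWithinAt.congr hform (hform x hx)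
  · rintro ⟨ξ, η⟩ hs
    obtain ⟨hξ, hη, hspan⟩ : -π ≤ ξ ∧ η ≤ π ∧ ∀ i, node i ≤ ξ ∨ η ≤ node i := by
      simp only [mem_insert_iff, mem_singleton_iff, Prod.mk.injEq] at hs
      rcases hs with ⟨rfl, rfl⟩ | ⟨rfl, rfl⟩ | ⟨rfl, rfl⟩ <;>
        refine ⟨by linarith, by linarith, fun i => ?_⟩ <;> fin_cases i <;>
        simp [hnode] <;> first | (left; linarith) | (right; linarith)
    obtain ⟨k', m', hk⟩ := exists_affine_add_integral_sub_mul hspan hq (-π) lam k m c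
    refine ⟨⟨k', m', fun x hx => ?_⟩, fun x => k' + lam * ∫ t in ξ..x, q t, ?_, fun x hx => ?_, ?_⟩
    · refine (hk x hx).trans ?_
      congr 2
      refine intervalIntegral.integral_congr fun t ht => ?_
      rw [uIcc_of_le hx.1] at ht
      simp only [hq_eq t ⟨hξ.trans ht.1, ht.2.trans (hx.2.trans hη)⟩]
    · have := intervalIntegral.continuous_primitive hq ξ
      fun_prop
    · have hd : HasDerivAt (fun y => k' * y + m' + lam * ∫ s in ξ..y, (y - s) * q s)
          (k' + lam * ∫ t in ξ..x, q t) x := by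
        have h1 : HasDerivAt (fun y => k' * y + m') k' x := by
          simpa using ((hasDerivAt_id x).const_mul k').add_const m'
        exact h1.add ((hasDerivAt_integral_sub_mul hq ξ x).const_mul lam)
      exact hd.hasDerivWithinAt.congr hk (hk x hx)
    · rw [ae_restrict_iff' measurableSet_Ioo]
      filter_upwards [LocallyIntegrable.ae_hasDerivAt_integral hqint.locallyIntegrable] with x hx hxs
      rw [← hq_eq x ⟨hξ.trans hxs.1.le, hxs.2.le.trans hη⟩]
      exact ((hx ξ).const_mul lam).const_add k'
end
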